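/- arXiv:math/0409187 — 7 statements merged into one kernel-verified Lean document; each statement's English description precedes it below -/
import Mathlib

section
/- Let n ≥ 3 and δ ∈ (0, 1/2). Let Γ ⊆ ℝⁿ be a cone (i.e., t·λ ∈ Γ whenever t > 0 and λ ∈ Γ), and let F : closure(Γ) → ℝ be continuous and positively homogeneous of degree one, i.e., F(tλ) = t·F(λ) for all t > 0 and λ ∈ closure(Γ). Assume that every nonzero λ ∈ closure(Γ) satisfies λᵢ ≥ −((1−2δ)/(n−2))·(λ₁+⋯+λₙ) for every index i. Then there exists a constant c > 0 such that for every λ ∈ Γ and every index i, (n−2)·λᵢ + (λ₁+⋯+λₙ) ≥ c·F(λ). -/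
theorem stmt_2 (n : ℕ) (hn : 3 ≤ n) (δ : ℝ) (hδ0 : 0 < δ) (hδ : δ < 1/2)
    (Γ : Set (EuclideanSpace ℝ (Fin n)))
    (hcone : ∀ t : ℝ, 0 < t → ∀ lam ∈ Γ, t • lam ∈ Γ)
    (F : EuclideanSpace ℝ (Fin n) → ℝ)
    (hFcont : ContinuousOn F (closure Γ))
    (hFhom : ∀ t : ℝ, 0 < t → ∀ lam ∈ closure Γ, F (t • lam) = t * F lam)
    (hcond : ∀ lam ∈ closure Γ, lam ≠ 0 →
        ∀ i, -((1 - 2*δ)/((n : ℝ) - 2)) * (∑ j, lam j) ≤ lam i) :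
    ∃ c : ℝ, 0 < c ∧ ∀ lam ∈ Γ, ∀ i,
      c * F lam ≤ ((n : ℝ) - 2) * lam i + ∑ j, lam j := by
  have hn' : (0:ℝ) < (n:ℝ) - 2 := by
    have : (3:ℝ) ≤ n := by exact_mod_cast hn
    linarith
  have ha : 0 < (1 - 2*δ)/((n : ℝ) - 2) := div_pos (by linarith) hn'
  obtain ⟨a, hadef⟩ : ∃ a, a = (1 - 2*δ)/((n : ℝ) - 2) := ⟨_, rfl⟩
  rw [← hadef] at ha hcond
  have han : ((n:ℝ) - 2) * a = 1 - 2*δ := by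
    rw [hadef]; field_simp
  have hpos : ∀ lam ∈ closure Γ, lam ≠ 0 → 0 < ∑ j, lam j := by
    intro lam hl h0
    have h1 := hcond lam hl h0
    have h2 : ∑ _j : Fin n, (-a * (∑ j, lam j)) ≤ ∑ j, lam j :=
      Finset.sum_le_sum (fun i _ => h1 i)
    simp only [Finset.sum_const, Finset.card_univ, Fintype.card_fin, nsmul_eq_mul] at h2
    by_contra hneg
    have hle : ∑ j, lam j ≤ 0 := not_lt.mp hneg
    have hna : 0 < (n:ℝ) * a := mul_pos (by linarith) ha
    have hge : 0 ≤ ∑ j, lam j := by nlinarith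
    have hz : ∑ j, lam j = 0 := le_antisymm hle hge
    rw [hz] at h1
    have h3 := (Finset.sum_eq_zero_iff_of_nonneg
      (fun i _ => by simpa using h1 i)).mp hz
    apply h0
    ext i
    simpa using h3 i (Finset.mem_univ i)
  have hK : IsCompact (closure Γ ∩ Metric.sphere (0 : EuclideanSpace ℝ (Fin n)) 1) :=
    (isCompact_sphere _ _).inter_left isClosed_closure
  have hne : ∀ lam ∈ closure Γ ∩ Metric.sphere (0 : EuclideanSpace ℝ (Fin n)) 1, lam ≠ 0 := by
    rintro lam ⟨_, h⟩ rfl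
    simp at h
  have hcont : ContinuousOn (fun lam : EuclideanSpace ℝ (Fin n) => F lam / ∑ j, lam j)
      (closure Γ ∩ Metric.sphere (0 : EuclideanSpace ℝ (Fin n)) 1) := by
    apply ContinuousOn.div (hFcont.mono Set.inter_subset_left)
    · fun_prop
    · intro lam hl
      exact (hpos lam hl.1 (hne lam hl)).ne'
  obtain ⟨B, hB⟩ := hK.bddAbove_image hcont
  have hB1 : 0 < max B 1 := lt_max_of_lt_right one_pos
  refine ⟨2 * δ / max B 1, by positivity, ?_⟩
  intro lam hl i
  have hlc := subset_closure hl
  by_cases h0 : lam = 0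
  · have h := hFhom 2 two_pos lam hlc
    rw [h0, smul_zero] at h
    have hF : F 0 = 0 := by linarith
    simp [h0, hF]
  have hnorm : 0 < ‖lam‖ := norm_pos_iff.mpr h0
  have hs := hpos lam hlc h0
  have hFle : F lam ≤ max B 1 * ∑ j, lam j := by
    have h1 : F (‖lam‖⁻¹ • lam) / ∑ j, (‖lam‖⁻¹ • lam) j ≤ B := by
      apply hB
      refine ⟨_, ⟨subset_closure (hcone _ (inv_pos.mpr hnorm) _ hl), ?_⟩, rfl⟩
      simp [norm_smul, hnorm.ne']
    rw [hFhom _ (inv_pos.mpr hnorm) _ hlc] at h1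
    simp only [PiLp.smul_apply, smul_eq_mul, ← Finset.mul_sum] at h1
    rw [mul_div_mul_left _ _ (inv_pos.mpr hnorm).ne'] at h1
    exact (div_le_iff₀ hs).mp (h1.trans (le_max_left _ _))
  have h2 := mul_le_mul_of_nonneg_left (hcond lam hlc h0 i) hn'.le
  have h3 : ((n:ℝ) - 2) * (-a * ∑ j, lam j) = -(1 - 2*δ) * ∑ j, lam j := by
    rw [← han]; ring
  have h4 : 2 * δ / max B 1 * F lam ≤ 2 * δ * ∑ j, lam j := by
    calc _ ≤ 2 * δ / max B 1 * (max B 1 * ∑ j, lam j) :=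
          mul_le_mul_of_nonneg_left hFle (by positivity)
      _ = _ := by field_simp
  linarith
end

section
/- Let n ≥ 3, 0 ≤ δ < 1/2, α ∈ ℝ, and set α_δ = (n−2)δ/(1−2δ) and p = n + 2α_δ. Let Ω ⊆ ℝⁿ be open, let u : Ω → ℝ be continuously differentiable with locally Lipschitz gradient ∇u, and let S : Ω → (symmetric n×n real matrices) be a matrix-valued function. Suppose x ∈ Ω is a point at which ∇u is differentiable, with derivative matrix H, and that the following matrix condition holds at x: for every v ∈ ℝⁿ, (n−2)⟨Hv, v⟩ + (1−2δ)(tr H)|v|² + (n−2)⟨∇u(x), v⟩² − (n−2)(1−δ)|∇u(x)|²|v|² + ⟨S(x)v, v⟩ ≥ 0. Then the vector field X = |∇u|^{p−2} e^{αu} ∇u is differentiable at x, and its divergence satisfies div X(x) ≥ (α − α_δ)|∇u(x)|^{p} e^{αu(x)} − (1/(1−2δ))‖S(x)‖·|∇u(x)|^{p−2} e^{αu(x)}, where ‖S(x)‖ denotes the operator norm of the matrix S(x). -/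
open RealInnerProductSpace

theorem stmt_5 (n : ℕ) (hn : 3 ≤ n) (δ α : ℝ) (hδ0 : 0 ≤ δ) (hδ : δ < 1/2)
    (αd p : ℝ) (hαd : αd = ((n : ℝ) - 2) * δ / (1 - 2*δ)) (hp : p = n + 2*αd)
    (Ω : Set (EuclideanSpace ℝ (Fin n))) (hΩ : IsOpen Ω)
    (u : EuclideanSpace ℝ (Fin n) → ℝ)
    (G : EuclideanSpace ℝ (Fin n) → EuclideanSpace ℝ (Fin n))
    (hu : ∀ y ∈ Ω, HasGradientAt u (G y) y)
    (hG : ∀ y ∈ Ω, ∃ s ∈ nhds y, ∃ K, LipschitzOnWith K G s)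
    (S : EuclideanSpace ℝ (Fin n) → EuclideanSpace ℝ (Fin n) →L[ℝ] EuclideanSpace ℝ (Fin n))
    (hS : ∀ y ∈ Ω, ∀ v w, ⟪S y v, w⟫ = ⟪v, S y w⟫)
    (x : EuclideanSpace ℝ (Fin n)) (hx : x ∈ Ω)
    (H : EuclideanSpace ℝ (Fin n) →L[ℝ] EuclideanSpace ℝ (Fin n))
    (hH : HasFDerivAt G H x)
    (hmat : ∀ v, 0 ≤ ((n : ℝ) - 2) * ⟪H v, v⟫
        + (1 - 2*δ) * (LinearMap.trace ℝ _ H.toLinearMap) * ‖v‖^2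
        + ((n : ℝ) - 2) * ⟪G x, v⟫^2
        - ((n : ℝ) - 2) * (1 - δ) * ‖G x‖^2 * ‖v‖^2
        + ⟪S x v, v⟫) :
    ∃ X' : EuclideanSpace ℝ (Fin n) →L[ℝ] EuclideanSpace ℝ (Fin n),
      HasFDerivAt (fun y => (‖G y‖ ^ (p - 2) * Real.exp (α * u y)) • G y) X' x ∧
      (α - αd) * ‖G x‖ ^ p * Real.exp (α * u x)
          - (1/(1 - 2*δ)) * ‖S x‖ * (‖G x‖ ^ (p - 2) * Real.exp (α * u x))
        ≤ LinearMap.trace ℝ _ X'.toLinearMap := by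
  have hn' : (3:ℝ) ≤ n := by exact_mod_cast hn
  have hd : 0 < 1 - 2*δ := by linarith
  have hq : (p - 2) * (1 - 2*δ) = (n:ℝ) - 2 := by
    rw [hp, hαd]; field_simp; ring
  have hqpos : 0 < p - 2 := by
    by_contra h
    nlinarith
  have hαd' : αd * (1 - 2*δ) = ((n:ℝ) - 2) * δ := by
    rw [hαd]; field_simp
  have hE : HasFDerivAt (fun y => Real.exp (α * u y))
      ((Real.exp (α * u x)) • (α • innerSL ℝ (G x))) x := by
    have h1 : HasFDerivAt u (innerSL ℝ (G x)) x := (hu x hx).hasFDerivAt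
    exact (h1.const_mul α).exp
  by_cases hGx : G x = 0
  · refine ⟨0, ?_, ?_⟩
    · have hc : Filter.Tendsto (fun y => ‖G y‖ ^ (p - 2) * Real.exp (α * u y)) (nhds x) (nhds 0) := by
        have h1 : ContinuousAt (fun y => ‖G y‖ ^ (p - 2) * Real.exp (α * u y)) x :=
          (hH.continuousAt.norm.rpow_const (Or.inr hqpos.le)).mul hE.continuousAt
        have h2 := h1.tendsto
        simpa [hGx, Real.zero_rpow hqpos.ne'] using h2
      have hO := hH.isBigO_sub
      rw [hasFDerivAt_iff_isLittleO]
      have h3 := ((Asymptotics.isLittleO_one_iff ℝ).2 hc).smul_isBigO hO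
      simpa [hGx] using h3
    · have hp0 : p ≠ 0 := by linarith
      simp [hGx, Real.zero_rpow hqpos.ne', Real.zero_rpow hp0]
  · have hg : 0 < ‖G x‖ := norm_pos_iff.2 hGx
    have hN : HasFDerivAt (fun y => ‖G y‖ ^ (p - 2))
        (((p - 2) / 2 * (‖G x‖ ^ 2) ^ ((p - 2) / 2 - 1)) • (2 • (innerSL ℝ (G x)).comp H)) x := by
      have h1 := (hH.norm_sq).rpow_const (p := (p - 2) / 2) (Or.inl (by positivity))
      have h2 : (fun y => ‖G y‖ ^ (p - 2)) = fun y => (‖G y‖ ^ 2) ^ ((p - 2) / 2) := by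
        funext y
        rw [← Real.rpow_natCast, ← Real.rpow_mul (norm_nonneg _)]
        congr 1
        push_cast; ring
      rw [h2]
      exact h1
    refine ⟨_, (hN.mul hE).smul hH, ?_⟩
    have e1 : (‖G x‖ ^ 2) ^ ((p - 2) / 2 - 1) = ‖G x‖ ^ (p - 2) / ‖G x‖ ^ 2 := by
      rw [← Real.rpow_natCast, ← Real.rpow_mul (norm_nonneg _), ← Real.rpow_sub hg]
      congr 1
      push_cast; ring
    have e2 : ‖G x‖ ^ p = ‖G x‖ ^ (p - 2) * ‖G x‖ ^ 2 := by
      rw [← Real.rpow_natCast, ← Real.rpow_add hg]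
      congr 1
      push_cast; ring
    have hA : 0 < ‖G x‖ ^ (p - 2) := Real.rpow_pos_of_pos hg _
    have hB : 0 < Real.exp (α * u x) := Real.exp_pos _
    have hm := hmat (G x)
    have hSb : ⟪S x (G x), G x⟫ ≤ ‖S x‖ * ‖G x‖ ^ 2 := by
      calc ⟪S x (G x), G x⟫ ≤ ‖S x (G x)‖ * ‖G x‖ := real_inner_le_norm _ _
        _ ≤ (‖S x‖ * ‖G x‖) * ‖G x‖ := by gcongr; exact (S x).le_opNorm _
        _ = _ := by ring
    rw [real_inner_self_eq_norm_sq] at hm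
    have tr : ∀ (c : ℝ) (φ : EuclideanSpace ℝ (Fin n) →L[ℝ] ℝ),
        LinearMap.trace ℝ _ (c • H + φ.smulRight (G x)).toLinearMap
          = c * LinearMap.trace ℝ _ H.toLinearMap + φ (G x) := by
      intro c φ
      have : (c • H + φ.smulRight (G x)).toLinearMap
        = c • H.toLinearMap + φ.toLinearMap.smulRight (G x) := rfl
      rw [this, map_add, map_smul, LinearMap.trace_smulRight]
      rfl
    rw [tr, e1, e2]
    simp only [add_apply, smul_apply, Pi.mul_apply,
      ContinuousLinearMap.comp_apply, innerSL_apply_apply, real_inner_self_eq_norm_sq,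
      smul_eq_mul, nsmul_eq_mul]
    rw [real_inner_comm]
    set A := ‖G x‖ ^ (p - 2)
    set B := Real.exp (α * u x)
    set T := LinearMap.trace ℝ _ H.toLinearMap
    set h := ⟪H (G x), G x⟫
    set s := ‖S x‖
    set g := ‖G x‖ ^ 2 with hgdef
    have hg2 : 0 < g := by positivity
    have key : 0 ≤ (p - 2) * h / g + T + αd * g + s / (1 - 2*δ) := by
      have : (p - 2) * h / g + T + αd * g + s / (1 - 2*δ)
        = (((p - 2) * (1 - 2*δ)) * h + (1-2*δ) * T * g + (αd * (1 - 2*δ)) * g^2 + s * g)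
          / (g * (1 - 2*δ)) := by
        field_simp
      rw [this, hq, hαd']
      apply div_nonneg _ (by positivity)
      nlinarith
    have k2 := mul_nonneg (mul_pos hA hB).le key
    rw [← sub_nonneg]
    refine k2.trans (le_of_eq ?_)
    push_cast
    field_simp
    ring
end

section
/- Let n ≥ 3, 0 ≤ δ < 1/2, and set α_δ = (n−2)δ/(1−2δ) and p = n + 2α_δ. Let α > α_δ and 0 < r₁ < r₂. For 0 < s < t write A(s,t) = {x ∈ ℝⁿ : s < |x| < t}. Let u be continuously differentiable with locally Lipschitz gradient on an open neighborhood of the closed annulus {x : r₁/2 ≤ |x| ≤ 2r₂}, and let S be a continuous map from that neighborhood to the symmetric n×n real matrices. Assume that for almost every x in A(r₁/2, 2r₂) (with respect to Lebesgue measure), ∇u is differentiable at x with derivative matrix H(x), and the following matrix condition holds at x: for every v ∈ ℝⁿ, (n−2)⟨H(x)v, v⟩ + (1−2δ)(tr H(x))|v|² + (n−2)⟨∇u(x), v⟩² − (n−2)(1−δ)|∇u(x)|²|v|² + ⟨S(x)v, v⟩ ≥ 0. Then there is a constant C > 0, depending only on n, δ, and (α − α_δ)⁻¹, such that ∫_{A(r₁,r₂)}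 |∇u|^{p} e^{αu} dx ≤ C·( ∫_{A(r₁/2, 2r₂)} ‖S(x)‖^{p/2} e^{αu} dx + r₁^{−p} ∫_{A(r₁/2, r₁)} e^{αu} dx + r₂^{−p} ∫_{A(r₂, 2r₂)} e^{αu} dx ), where ‖S(x)‖ denotes the operator norm of S(x). -/
open MeasureTheory RealInnerProductSpace

lemma aux_young {a T p m : ℝ} (ha : 0 ≤ a) (hT : 0 ≤ T) (hm : 0 < m) (hmp : m < p) :
    a ^ (p - m) * T ≤ a ^ p + T ^ (p / m) := by
  have hp : 0 < p := hm.trans hmp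
  rcases le_total T (a ^ m) with h | h
  · have : a ^ (p - m) * T ≤ a ^ (p - m) * a ^ m := by gcongr
    rw [← Real.rpow_add_of_nonneg ha (by linarith) hm.le, sub_add_cancel] at this
    have := Real.rpow_nonneg hT (p / m)
    linarith
  · have h1 : a ^ (p - m) ≤ T ^ ((p - m) / m) := by
      have : (a ^ m) ^ ((p - m) / m) ≤ T ^ ((p - m) / m) := by
        apply Real.rpow_le_rpow (Real.rpow_nonneg ha _) h
        apply div_nonneg <;> linarith
      rwa [← Real.rpow_mul ha, mul_div_cancel₀ _ hm.ne'] at this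
    have h2 : a ^ (p - m) * T ≤ T ^ ((p - m) / m) * T ^ (1 : ℝ) := by
      rw [Real.rpow_one]; gcongr
    rw [← Real.rpow_add_of_nonneg hT (by apply div_nonneg <;> linarith) zero_le_one] at h2
    have e : (p - m) / m + 1 = p / m := by field_simp; ring
    rw [e] at h2
    have := Real.rpow_nonneg ha p
    linarith

lemma aux_young' {a t p m ε : ℝ} (ha : 0 ≤ a) (ht : 0 ≤ t) (hm : 0 < m) (hmp : m < p)
    (hε : 0 < ε) :
    a ^ (p - m) * t ≤ ε * a ^ p + ε * (t / ε) ^ (p / m) := by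
  have := aux_young ha (div_nonneg ht hε.le) hm hmp
  have h := mul_le_mul_of_nonneg_left this hε.le
  have e : ε * (a ^ (p - m) * (t / ε)) = a ^ (p - m) * t := by field_simp
  rw [e] at h; linarith

section

variable {E : Type*} [NormedAddCommGroup E] [InnerProductSpace ℝ E]

lemma aux_lip {X : E → ℝ} [FiniteDimensional ℝ E] (hX : LocallyLipschitz X)
    (hc : HasCompactSupport X) : ∃ K, LipschitzWith K X := by
  obtain ⟨M, hM⟩ := hX.continuous.bounded_above_of_compact_support hc
  have hM0 : 0 ≤ M := (norm_nonneg _).trans (hM 0)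
  have hcomp : IsCompact (Metric.cthickening 1 (tsupport X)) := IsCompact.cthickening hc
  obtain ⟨K, hK⟩ := (hX.locallyLipschitzOn
    (s := Metric.cthickening 1 (tsupport X))).exists_lipschitzOnWith_of_compact hcomp
  have key : ∀ x y, X x ≠ 0 → dist (X x) (X y) ≤ ((K : ℝ) + 2 * M) * dist x y := by
    intro x y hx
    have hx' : x ∈ tsupport X := subset_tsupport _ hx
    rcases le_total (dist x y) 1 with h | h
    · have h1 := hK.dist_le_mul x (Metric.self_subset_cthickening _ hx') y
        (Metric.mem_cthickening_of_dist_le y x 1 _ hx' (by rwa [dist_comm]))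
      nlinarith [dist_nonneg (x := x) (y := y)]
    · have h1 : dist (X x) (X y) ≤ 2 * M := by
        rw [dist_eq_norm]
        have := norm_sub_le (X x) (X y)
        linarith [hM x, hM y]
      nlinarith [K.2, mul_nonneg K.2 (dist_nonneg (x := x) (y := y))]
  refine ⟨K + 2 * M.toNNReal, LipschitzWith.of_dist_le_mul ?_⟩
  intro x y
  push_cast
  rw [Real.coe_toNNReal M hM0]
  by_cases hx : X x = 0
  · by_cases hy : X y = 0
    · rw [hx, hy, dist_self]; positivity
    · rw [dist_comm, dist_comm x]; exact key y x hy
  · exact key x y hx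

lemma aux_div [FiniteDimensional ℝ E] [MeasurableSpace E] [BorelSpace E] {μ : Measure E}
    [μ.IsAddHaarMeasure] {X : E → ℝ} (hX : LocallyLipschitz X)
    (hc : HasCompactSupport X) (v : E) :
    Integrable (fun x => lineDeriv ℝ X x v) μ ∧ ∫ x, lineDeriv ℝ X x v ∂μ = 0 := by
  obtain ⟨K, hK⟩ := aux_lip hX hc
  constructor
  · have h1 := (hK.locallyIntegrable_lineDeriv (μ := μ) v).integrableOn_isCompact hc
    rwa [integrableOn_iff_integrable_of_support_subset] at h1
    intro x hx
    by_contra hx'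
    apply hx
    have : X =ᶠ[nhds x] fun _ => 0 := notMem_tsupport_iff_eventuallyEq.1 hx'
    show lineDeriv ℝ X x v = 0
    rw [this.lineDeriv_eq]
    simp [lineDeriv]
  · have h := (LipschitzWith.const (1 : ℝ)).integral_lineDeriv_mul_eq (μ := μ) hK hc (-v)
    simp only [neg_neg, mul_one] at h
    rw [← h]
    simp [lineDeriv]

lemma aux_phi (q : ℝ) (hq : 0 < q) (v b : E) :
    HasFDerivAt (fun w : E => ‖w‖ ^ q * ⟪w, b⟫)
      ((q * ‖v‖ ^ (q - 2) * ⟪v, b⟫) • innerSL ℝ v + ‖v‖ ^ q • innerSL ℝ b) v := by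
  rcases eq_or_ne v 0 with rfl | hv
  · simp only [inner_zero_left, mul_zero, zero_smul, norm_zero, Real.zero_rpow hq.ne', add_zero]
    rw [hasFDerivAt_iff_isLittleO_nhds_zero]
    simp only [zero_add, inner_zero_left, mul_zero, sub_zero, zero_apply]
    have h1 : (fun w : E => ‖w‖ ^ q) =o[nhds 0] (fun _ => (1:ℝ)) := by
      rw [Asymptotics.isLittleO_one_iff]
      have : ContinuousAt (fun w : E => ‖w‖ ^ q) 0 :=
        continuous_norm.continuousAt.rpow_const (Or.inr hq.le)
      simpa [ContinuousAt, Real.zero_rpow hq.ne'] using this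
    have h2 : (fun w : E => ⟪w, b⟫) =O[nhds 0] (fun w => ‖w‖) := by
      apply Asymptotics.IsBigO.of_bound ‖b‖
      filter_upwards with w
      rw [norm_norm, mul_comm]
      exact norm_inner_le_norm w b
    rw [← Asymptotics.isLittleO_norm_right]
    simpa using (h1.mul_isBigO h2)
  · have h0 : 0 < ‖v‖ := norm_pos_iff.2 hv
    have e : (fun w : E => ‖w‖ ^ q * ⟪w, b⟫) = fun w => (‖w‖^2) ^ (q/2) * ⟪b, w⟫ := by
      ext w
      rw [← Real.rpow_natCast, ← Real.rpow_mul (norm_nonneg _), real_inner_comm]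
      congr 2; push_cast; ring
    rw [e]
    have h1 := ((hasFDerivAt_id (𝕜 := ℝ) v).norm_sq.rpow_const (p := q/2)
      (Or.inl (by positivity))).mul (innerSL ℝ b).hasFDerivAt
    refine h1.congr_fderiv ?_
    ext w
    have e1 : (‖v‖^2) ^ (q/2) = ‖v‖ ^ q := by
      rw [← Real.rpow_natCast, ← Real.rpow_mul (norm_nonneg _)]
      congr 1; push_cast; ring
    have e2 : (‖v‖^2) ^ (q/2 - 1) = ‖v‖ ^ (q - 2) := by
      rw [← Real.rpow_natCast, ← Real.rpow_mul (norm_nonneg _)]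
      congr 1; push_cast; ring
    simp [e1, e2, real_inner_comm]
    ring

/-- pointwise divergence formula -/
lemma aux_lineDeriv {G : E → E} {u η : E → ℝ} {x : E} {H : E →L[ℝ] E} {g : E} {p α : ℝ} (b : E)
    (hp : 2 < p) (hG : HasFDerivAt G H x) (hu : HasFDerivAt u (innerSL ℝ (G x)) x)
    (hη : HasFDerivAt η (innerSL ℝ g) x) :
    lineDeriv ℝ (fun y => ‖G y‖ ^ (p-2) * ⟪G y, b⟫ * (Real.exp (α * u y) * η y ^ p)) x b
     = (((p-2) * ‖G x‖ ^ (p-4) * (⟪G x, b⟫ * ⟪G x, H b⟫) + ‖G x‖ ^ (p-2) * ⟪b, H b⟫) * η x ^ p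
       + ‖G x‖ ^ (p-2) * (α * (⟪G x, b⟫ * ⟪G x, b⟫) * η x ^ p + p * η x ^ (p-1) * (⟪G x, b⟫ * ⟪g, b⟫)))
        * Real.exp (α * u x) := by
  have h1 := (aux_phi (p-2) (by linarith) (G x) b).comp x hG
  have h2 := ((hu.const_mul α).exp).mul (hη.rpow_const (p := p) (Or.inr (by linarith)))
  have h3 := (h1.mul h2).hasLineDerivAt b
  have h4 := h3.lineDeriv
  simp only [Function.comp_def] at h4
  refine Eq.trans h4 ?_
  have : p - 2 - 2 = p - 4 := by ring
  simp [this]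
  ring

lemma aux_point [CompleteSpace E] {ι : Type*} [Fintype ι] (b : OrthonormalBasis ι ℝ E)
    {G : E → E} {u η : E → ℝ} {x : E} {H S : E →L[ℝ] E} {g : E}
    {p α αd N δ : ℝ} (hp : 2 < p) (hδ : δ < 1/2) (hN : N = (p - 2) * (1 - 2*δ))
    (hαd : N * δ = αd * (1 - 2*δ)) (hα : αd < α)
    (hG : HasFDerivAt G H x) (hu : HasFDerivAt u (innerSL ℝ (G x)) x)
    (hη : HasFDerivAt η (innerSL ℝ g) x) (hη0 : 0 ≤ η x)
    (hH : 0 ≤ N * ⟪H (G x), G x⟫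
              + (1 - 2*δ) * (LinearMap.trace ℝ _ H.toLinearMap) * ‖G x‖^2
              + N * ⟪G x, G x⟫^2
              - N * (1 - δ) * ‖G x‖^2 * ‖G x‖^2
              + ⟪S (G x), G x⟫) :
    (α - αd) / 2 * (‖G x‖ ^ p * Real.exp (α * u x)) * η x ^ p ≤
      ∑ i, lineDeriv ℝ (fun y => ‖G y‖ ^ (p-2) * ⟪G y, b i⟫ *
        (Real.exp (α * u y) * η y ^ p)) x (b i)
      + ((α - αd)/4 * (((1 - 2*δ) * ((α - αd)/4))⁻¹) ^ (p/2)) *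
          (‖S‖ ^ (p/2) * Real.exp (α * u x)) * η x ^ p
      + ((α - αd)/4 * (p / ((α - αd)/4)) ^ p) * (‖g‖ ^ p * Real.exp (α * u x)) := by
  have hd : 0 < 1 - 2*δ := by linarith
  set ε := (α - αd)/4 with hε
  have hε0 : 0 < ε := by rw [hε]; linarith
  set a := ‖G x‖ with ha
  have ha0 : 0 ≤ a := norm_nonneg _
  set e := Real.exp (α * u x) with he
  have he0 : 0 < e := Real.exp_pos _
  set t := η x with ht
  set tr := LinearMap.trace ℝ _ H.toLinearMap with htr
  have hsum : ∑ i, lineDeriv ℝ (fun y => ‖G y‖ ^ (p-2) * ⟪G y, b i⟫ *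
        (Real.exp (α * u y) * η y ^ p)) x (b i)
      = (((p-2) * a ^ (p-4) * ⟪H (G x), G x⟫ + a ^ (p-2) * tr) * t ^ p
       + a ^ (p-2) * (α * a^2 * t ^ p + p * t ^ (p-1) * ⟪G x, g⟫)) * e := by
    have s1 : ∑ i, ⟪G x, b i⟫ * ⟪G x, H (b i)⟫ = ⟪H (G x), G x⟫ := by
      have h := b.sum_inner_mul_inner (G x) (ContinuousLinearMap.adjoint H (G x))
      simp only [ContinuousLinearMap.adjoint_inner_right] at h
      rw [← h]
      apply Finset.sum_congr rfl
      intro i _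
      rw [real_inner_comm (H (b i))]
    have s2 : ∑ i, ⟪b i, H (b i)⟫ = tr := by
      rw [htr, LinearMap.trace_eq_sum_inner _ b]; rfl
    have s3 : ∑ i, ⟪G x, b i⟫ * ⟪G x, b i⟫ = a^2 := by
      rw [ha, ← real_inner_self_eq_norm_sq, ← b.sum_inner_mul_inner (G x) (G x)]
      apply Finset.sum_congr rfl
      intro i _
      rw [real_inner_comm (b i)]
    have s4 : ∑ i, ⟪G x, b i⟫ * ⟪g, b i⟫ = ⟪G x, g⟫ := by
      rw [← b.sum_inner_mul_inner (G x) g]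
      apply Finset.sum_congr rfl
      intro i _
      rw [real_inner_comm (b i) g]
    rw [Finset.sum_congr rfl fun i _ => aux_lineDeriv (b i) hp hG hu hη]
    rw [← Finset.sum_mul, Finset.sum_add_distrib, ← Finset.sum_mul, Finset.sum_add_distrib,
      ← Finset.mul_sum, ← Finset.mul_sum, ← Finset.mul_sum, Finset.sum_add_distrib,
      ← Finset.sum_mul, ← Finset.mul_sum, ← Finset.mul_sum, s1, s2, s3, s4]
  rw [hsum]
  -- curvature inequality
  have hp0 : a ^ (p-2) * a^2 = a ^ p := by
    rw [← Real.rpow_natCast a 2, ← Real.rpow_add_of_nonneg ha0 (by linarith) (by norm_num)]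
    congr 1; push_cast; ring
  have hcurv : 0 ≤ (p-2) * a ^ (p-4) * ⟪H (G x), G x⟫ + a ^ (p-2) * tr + αd * a ^ p
      + a ^ (p-2) * (‖S‖ / (1 - 2*δ)) := by
    rcases eq_or_lt_of_le ha0 with h0 | h0
    · have hz : G x = 0 := by rw [← norm_eq_zero, ← ha, ← h0]
      rw [← h0, hz, Real.zero_rpow (by linarith : p - 2 ≠ 0), Real.zero_rpow (by linarith : p ≠ 0)]
      simp
    · have hS : ⟪S (G x), G x⟫ ≤ ‖S‖ * a^2 := by
        refine (real_inner_le_norm _ _).trans ?_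
        have := S.le_opNorm (G x)
        rw [sq, ← mul_assoc]; gcongr
      rw [real_inner_self_eq_norm_sq, ← ha] at hH
      have h1 : 0 ≤ (p-2) * ⟪H (G x), G x⟫ + tr * a^2 + αd * a^2 * a^2
          + ‖S‖ / (1-2*δ) * a^2 := by
        have h2 : 0 ≤ (1 - 2*δ) * ((p-2) * ⟪H (G x), G x⟫ + tr * a^2 + αd * a^2 * a^2
          + ‖S‖ / (1-2*δ) * a^2) := by
          have e1 : (1 - 2*δ) * ((p-2) * ⟪H (G x), G x⟫ + tr * a^2 + αd * a^2 * a^2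
            + ‖S‖ / (1-2*δ) * a^2) = N * ⟪H (G x), G x⟫ + (1-2*δ) * tr * a^2 + (N*δ) * a^2*a^2
              + ‖S‖ * a^2 := by
            rw [hαd, hN]; field_simp
          rw [e1]; nlinarith
        exact nonneg_of_mul_nonneg_right h2 hd
      have hp2 : a ^ (p-4) * a^2 = a ^ (p-2) := by
        rw [← Real.rpow_natCast a 2, ← Real.rpow_add h0]
        congr 1; push_cast; ring
      have h3 := mul_nonneg (Real.rpow_nonneg ha0 (p-4)) h1
      calc 0 ≤ _ := h3
        _ = _ := by rw [← hp0, ← hp2]; ring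
  have hS0 : 0 ≤ ‖S‖ := norm_nonneg _
  have y1 := aux_young' (t := ‖S‖ / (1 - 2*δ)) (p := p) ha0 (by positivity) two_pos hp hε0
  have y2 := aux_young' (a := a * t) (t := p * ‖g‖) (p := p) (by positivity)
    (by positivity) one_pos (by linarith) hε0
  have e1 : (‖S‖ / (1 - 2*δ) / ε) ^ (p/2) = (((1 - 2*δ) * ε)⁻¹) ^ (p/2) * ‖S‖ ^ (p/2) := by
    rw [← Real.mul_rpow (by positivity) hS0]; congr 1; field_simp
  have e2 : (p * ‖g‖ / ε) ^ (p/1) = (p/ε) ^ p * ‖g‖ ^ p := by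
    rw [← Real.mul_rpow (by positivity) (norm_nonneg _), div_one]; congr 1; field_simp
  rw [e1] at y1
  rw [e2, Real.mul_rpow ha0 hη0, Real.mul_rpow ha0 hη0] at y2
  have hg : - (a ^ (p-1) * ‖g‖) ≤ a ^ (p-2) * ⟪G x, g⟫ := by
    have h := neg_le_of_abs_le (abs_real_inner_le_norm (G x) g)
    have h1 := mul_le_mul_of_nonneg_left h (Real.rpow_nonneg ha0 (p-2))
    have e3 : a ^ (p-1) = a ^ (p-2) * a := by
      have := Real.rpow_add_of_nonneg ha0 (by linarith : 0 ≤ p - 2) zero_le_one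
      rw [Real.rpow_one] at this
      rw [← this]
      congr 1; ring
    rw [e3]; rw [← ha] at h1; linarith
  have htp : 0 ≤ t ^ p := Real.rpow_nonneg hη0 _
  have htp1 : 0 ≤ t ^ (p-1) := Real.rpow_nonneg hη0 _
  have hg' := mul_le_mul_of_nonneg_left hg (show 0 ≤ p * t ^ (p-1) by positivity)
  have c1 := mul_nonneg hcurv htp
  have c2 := mul_le_mul_of_nonneg_right y1 htp
  have e4 : a ^ (p-2) * (α * a^2 * t ^ p + p * t ^ (p-1) * ⟪G x, g⟫)
     = α * a ^ p * t ^ p + p * t ^ (p-1) * (a ^ (p-2) * ⟪G x, g⟫) := by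
    rw [← hp0]; ring
  rw [e4]
  have e5 : (α - αd) = 4 * ε := by rw [hε]; ring
  have e6 : α = αd + 4 * ε := by linarith
  have fin : 2 * ε * a ^ p * t ^ p ≤ ((p-2) * a ^ (p-4) * ⟪H (G x), G x⟫ + a ^ (p-2) * tr) * t ^ p
      + (α * a ^ p * t ^ p + p * t ^ (p-1) * (a ^ (p-2) * ⟪G x, g⟫))
      + ε * ((1 - 2*δ) * ε)⁻¹ ^ (p/2) * ‖S‖ ^ (p/2) * t ^ p
      + ε * (p/ε) ^ p * ‖g‖ ^ p := by
    generalize ((1 - 2*δ) * ε)⁻¹ ^ (p/2) = k1 at *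
    generalize (p/ε) ^ p = k2 at *
    rw [e6]
    linarith
  have := mul_le_mul_of_nonneg_right fin he0.le
  rw [e5]
  linarith

lemma aux_locLip {G : E → E} {u η : E → ℝ} {x b : E} {Ω : Set E} (hΩ : IsOpen Ω)
    {p α : ℝ} (hp : 3 ≤ p) (hx : x ∈ Ω)
    (hu : ∀ y ∈ Ω, HasFDerivAt u (innerSL ℝ (G y)) y)
    (hG : ∀ y ∈ Ω, ∃ s ∈ nhds y, ∃ K, LipschitzOnWith K G s)
    (hη : LocallyLipschitz η) :
    ∃ K, ∃ s ∈ nhds x, LipschitzOnWith K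
      (fun y => ‖G y‖ ^ (p-2) * ⟪G y, b⟫ * (Real.exp (α * u y) * η y ^ p)) s := by
  have hGc : ContinuousOn G Ω := by
    intro y hy
    obtain ⟨s, hs, K, hK⟩ := hG y hy
    exact (hK.continuousOn.continuousAt hs).continuousWithinAt
  obtain ⟨s1, hs1, K1, hK1⟩ := hG x hx
  obtain ⟨K2, s2, hs2, hK2⟩ := hη x
  have huc : ContDiffAt ℝ 1 u x := by
    rw [contDiffAt_one_iff]
    refine ⟨fun y => innerSL ℝ (G y), Ω, hΩ.mem_nhds hx, ?_, hu⟩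
    exact (innerSL ℝ).continuous.comp_continuousOn hGc
  obtain ⟨K3, s3, hs3, hK3⟩ := huc.exists_lipschitzOnWith
  let F : ℝ × ℝ × ℝ × ℝ → ℝ := fun z =>
    z.1 ^ (p-2) * z.2.1 * (Real.exp (α * z.2.2.1) * z.2.2.2 ^ p)
  have hF : ContDiff ℝ 1 F := by
    have h1 : ContDiff ℝ 1 (fun t : ℝ => t ^ (p-2)) := by
      exact_mod_cast Real.contDiff_rpow_const_of_le (p := p-2) (n := 1) (by push_cast; linarith)
    have h2 : ContDiff ℝ 1 (fun t : ℝ => t ^ p) := by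
      exact_mod_cast Real.contDiff_rpow_const_of_le (p := p) (n := 1) (by push_cast; linarith)
    have h3 := h1.comp (contDiff_fst (E := ℝ) (F := ℝ × ℝ × ℝ))
    have h4 := h2.comp ((contDiff_snd (E := ℝ) (F := ℝ)).comp ((contDiff_snd (E := ℝ)
      (F := ℝ × ℝ)).comp (contDiff_snd (E := ℝ) (F := ℝ × ℝ × ℝ))))
    have h5 : ContDiff ℝ 1 (fun z : ℝ × ℝ × ℝ × ℝ => Real.exp (α * z.2.2.1)) := by fun_prop
    have h6 : ContDiff ℝ 1 (fun z : ℝ × ℝ × ℝ × ℝ => z.2.1) := by fun_prop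
    exact (h3.mul h6).mul (h5.mul h4)
  let T : E → ℝ × ℝ × ℝ × ℝ := fun y => (‖G y‖, ⟪G y, b⟫, u y, η y)
  obtain ⟨K0, s0, hs0, hK0⟩ := hF.locallyLipschitz (T x)
  have l1 : LipschitzOnWith (1 * K1) (fun y => ‖G y‖) s1 :=
    lipschitzWith_one_norm.comp_lipschitzOnWith hK1
  have l2 : LipschitzOnWith (‖innerSL ℝ b‖₊ * K1) (fun y => ⟪G y, b⟫) s1 := by
    have := (innerSL ℝ b).lipschitz.comp_lipschitzOnWith hK1
    have e : (fun y => ⟪G y, b⟫) = (innerSL ℝ b) ∘ G := by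
      ext y; simp [real_inner_comm]
    rw [e]; exact this
  have hT := (l1.mono (Set.inter_subset_left (t := s2 ∩ s3))).prodMk
    ((l2.mono (Set.inter_subset_left (t := s2 ∩ s3))).prodMk
    ((hK3.mono (Set.inter_subset_right.trans Set.inter_subset_right)).prodMk
      (hK2.mono (Set.inter_subset_right.trans Set.inter_subset_left))))
  have hnh : s1 ∩ (s2 ∩ s3) ∈ nhds x :=
    Filter.inter_mem hs1 (Filter.inter_mem hs2 hs3)
  have hTc : ContinuousAt T x := hT.continuousOn.continuousAt hnh
  exact ⟨_, (s1 ∩ (s2 ∩ s3)) ∩ T ⁻¹' s0, Filter.inter_mem hnh (hTc hs0),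
    hK0.comp (hT.mono Set.inter_subset_left) (fun y hy => hy.2)⟩

lemma aux_norm [CompleteSpace E] {x : E} (hx : x ≠ 0) (c d : ℝ) :
    ∃ g : E, ‖g‖ ≤ |c| ∧ HasFDerivAt (fun y : E => c * ‖y‖ + d) (innerSL ℝ g) x := by
  have h1 : DifferentiableAt ℝ (fun y : E => ‖y‖) x :=
    (contDiffAt_norm (n := 1) ℝ hx).differentiableAt (by norm_num)
  have h2 : ‖fderiv ℝ (fun y : E => ‖y‖) x‖ ≤ 1 := by
    have := norm_fderiv_le_of_lipschitz ℝ (f := fun y : E => ‖y‖) (x₀ := x) lipschitzWith_one_norm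
    simpa using this
  refine ⟨c • (InnerProductSpace.toDual ℝ E).symm (fderiv ℝ (fun y : E => ‖y‖) x), ?_, ?_⟩
  · rw [norm_smul, LinearIsometryEquiv.norm_map, Real.norm_eq_abs]
    exact mul_le_of_le_one_right (abs_nonneg _) h2
  · refine ((h1.hasFDerivAt.const_mul c).add_const d).congr_fderiv ?_
    ext w
    simp [inner_smul_left]

noncomputable def auxEta (r₁ r₂ : ℝ) (x : E) : ℝ :=
  max 0 (min 1 (min (2 / r₁ * ‖x‖ + -1) (-1 / r₂ * ‖x‖ + 2)))

lemma auxEta_lip (r₁ r₂ : ℝ) : LocallyLipschitz (auxEta r₁ r₂ : E → ℝ) := by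
  have h : ∀ c d : ℝ, LocallyLipschitz (fun x : E => c * ‖x‖ + d) := by
    intro c d
    have h1 : ContDiff ℝ 1 (fun t : ℝ => c * t + d) := by fun_prop
    exact h1.locallyLipschitz.comp lipschitzWith_one_norm.locallyLipschitz
  exact (((h _ _).min (h _ _)).const_min 1).const_max 0

lemma auxEta_zero {r₁ r₂ : ℝ} (h1 : 0 < r₁) (h2 : r₁ < r₂) {x : E}
    (hx : ¬ (r₁/2 ≤ ‖x‖ ∧ ‖x‖ ≤ 2*r₂)) : auxEta r₁ r₂ x = 0 := by
  have h3 : 0 < r₂ := h1.trans h2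
  apply max_eq_left
  by_cases h : r₁/2 ≤ ‖x‖
  · have h4 : 2*r₂ < ‖x‖ := by by_contra h5; exact hx ⟨h, not_lt.1 h5⟩
    refine (min_le_right _ _).trans ((min_le_right _ _).trans ?_)
    have : 2 < ‖x‖ / r₂ := by rwa [lt_div_iff₀ h3]
    have e : -1 / r₂ * ‖x‖ = - (‖x‖ / r₂) := by ring
    linarith
  · refine (min_le_right _ _).trans ((min_le_left _ _).trans ?_)
    have : ‖x‖ / r₁ < 1/2 := by rw [div_lt_iff₀ h1]; linarith
    have e : 2 / r₁ * ‖x‖ = 2 * (‖x‖ / r₁) := by ring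
    linarith

lemma auxEta_mem (r₁ r₂ : ℝ) (x : E) : 0 ≤ auxEta r₁ r₂ x ∧ auxEta r₁ r₂ x ≤ 1 :=
  ⟨le_max_left _ _, max_le zero_le_one (min_le_left _ _)⟩

lemma auxEta_in {r₁ r₂ : ℝ} (h1 : 0 < r₁) (h2 : r₁ < r₂) {x : E}
    (hx : r₁/2 < ‖x‖ ∧ ‖x‖ < r₁) : auxEta r₁ r₂ x = 2 / r₁ * ‖x‖ + -1 := by
  have h3 : 0 < r₂ := h1.trans h2
  have a1 : 1/2 < ‖x‖ / r₁ := by rw [lt_div_iff₀ h1]; linarith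
  have a2 : ‖x‖ / r₁ < 1 := by rw [div_lt_iff₀ h1]; linarith
  have a3 : ‖x‖ / r₂ < 1 := by rw [div_lt_iff₀ h3]; linarith
  have e : 2 / r₁ * ‖x‖ = 2 * (‖x‖ / r₁) := by ring
  have e' : -1 / r₂ * ‖x‖ = - (‖x‖ / r₂) := by ring
  rw [auxEta, e, e', min_eq_left (a := 2 * (‖x‖ / r₁) + -1) (by linarith),
    min_eq_right (by linarith), max_eq_right (by linarith)]

lemma auxEta_mid {r₁ r₂ : ℝ} (h1 : 0 < r₁) (h2 : r₁ < r₂) {x : E}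
    (hx : r₁ < ‖x‖ ∧ ‖x‖ < r₂) : auxEta r₁ r₂ x = 1 := by
  have h3 : 0 < r₂ := h1.trans h2
  have a2 : 1 < ‖x‖ / r₁ := by rw [lt_div_iff₀ h1]; linarith
  have a3 : ‖x‖ / r₂ < 1 := by rw [div_lt_iff₀ h3]; linarith
  have e : 2 / r₁ * ‖x‖ = 2 * (‖x‖ / r₁) := by ring
  have e' : -1 / r₂ * ‖x‖ = - (‖x‖ / r₂) := by ring
  rw [auxEta, e, e', min_eq_left (a := 1) (le_min (by linarith) (by linarith)),
    max_eq_right (by linarith)]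

lemma auxEta_out {r₁ r₂ : ℝ} (h1 : 0 < r₁) (h2 : r₁ < r₂) {x : E}
    (hx : r₂ < ‖x‖ ∧ ‖x‖ < 2*r₂) : auxEta r₁ r₂ x = -1 / r₂ * ‖x‖ + 2 := by
  have h3 : 0 < r₂ := h1.trans h2
  have a1 : 1 < ‖x‖ / r₁ := by rw [lt_div_iff₀ h1]; linarith
  have a2 : 1 < ‖x‖ / r₂ := by rw [lt_div_iff₀ h3]; linarith
  have a3 : ‖x‖ / r₂ < 2 := by rw [div_lt_iff₀ h3]; linarith
  have e : 2 / r₁ * ‖x‖ = 2 * (‖x‖ / r₁) := by ring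
  have e' : -1 / r₂ * ‖x‖ = - (‖x‖ / r₂) := by ring
  rw [auxEta, e, e', min_eq_right (a := 2 * (‖x‖ / r₁) + -1) (by linarith),
    min_eq_right (by linarith), max_eq_right (by linarith)]

lemma aux_open (a b : ℝ) : IsOpen {y : E | a < ‖y‖ ∧ ‖y‖ < b} :=
  (isOpen_lt continuous_const continuous_norm).inter (isOpen_lt continuous_norm continuous_const)

lemma aux_closed (a b : ℝ) : IsClosed {y : E | a ≤ ‖y‖ ∧ ‖y‖ ≤ b} :=
  (isClosed_le continuous_const continuous_norm).inter
    (isClosed_le continuous_norm continuous_const)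

lemma aux_compact [FiniteDimensional ℝ E] (a b : ℝ) : IsCompact {y : E | a ≤ ‖y‖ ∧ ‖y‖ ≤ b} := by
  have : ProperSpace E := FiniteDimensional.proper ℝ E
  refine (isCompact_closedBall (0:E) b).of_isClosed_subset (aux_closed a b) ?_
  intro y hy
  simpa using hy.2

end

theorem stmt_6 (n : ℕ) (hn : 3 ≤ n) (δ : ℝ) (hδ0 : 0 ≤ δ) (hδ : δ < 1/2)
    (αd p α : ℝ) (hαd : αd = ((n : ℝ) - 2) * δ / (1 - 2*δ)) (hp : p = n + 2*αd)
    (hα : αd < α) :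
    ∃ C : ℝ, 0 < C ∧
      ∀ (r₁ r₂ : ℝ), 0 < r₁ → r₁ < r₂ →
      ∀ (Ω : Set (EuclideanSpace ℝ (Fin n))), IsOpen Ω →
        {x : EuclideanSpace ℝ (Fin n) | r₁/2 ≤ ‖x‖ ∧ ‖x‖ ≤ 2*r₂} ⊆ Ω →
      ∀ (u : EuclideanSpace ℝ (Fin n) → ℝ)
        (G : EuclideanSpace ℝ (Fin n) → EuclideanSpace ℝ (Fin n)),
        (∀ y ∈ Ω, HasGradientAt u (G y) y) →
        (∀ y ∈ Ω, ∃ s ∈ nhds y, ∃ K, LipschitzOnWith K G s) →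
      ∀ S : EuclideanSpace ℝ (Fin n) → EuclideanSpace ℝ (Fin n) →L[ℝ] EuclideanSpace ℝ (Fin n),
        ContinuousOn S Ω →
        (∀ y ∈ Ω, ∀ v w, ⟪S y v, w⟫ = ⟪v, S y w⟫) →
        (∀ᵐ x ∂volume, (r₁/2 < ‖x‖ ∧ ‖x‖ < 2*r₂) →
          ∃ H : EuclideanSpace ℝ (Fin n) →L[ℝ] EuclideanSpace ℝ (Fin n),
            HasFDerivAt G H x ∧
            ∀ v, 0 ≤ ((n : ℝ) - 2) * ⟪H v, v⟫
              + (1 - 2*δ) * (LinearMap.trace ℝ _ H.toLinearMap) * ‖v‖^2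
              + ((n : ℝ) - 2) * ⟪G x, v⟫^2
              - ((n : ℝ) - 2) * (1 - δ) * ‖G x‖^2 * ‖v‖^2
              + ⟪S x v, v⟫) →
        (∫ x in {y : EuclideanSpace ℝ (Fin n) | r₁ < ‖y‖ ∧ ‖y‖ < r₂},
            ‖G x‖ ^ p * Real.exp (α * u x))
          ≤ C * ((∫ x in {y : EuclideanSpace ℝ (Fin n) | r₁/2 < ‖y‖ ∧ ‖y‖ < 2*r₂},
                ‖S x‖ ^ (p/2) * Real.exp (α * u x))
            + r₁ ^ (-p) * (∫ x in {y : EuclideanSpace ℝ (Fin n) | r₁/2 < ‖y‖ ∧ ‖y‖ < r₁},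
                Real.exp (α * u x))
            + r₂ ^ (-p) * (∫ x in {y : EuclideanSpace ℝ (Fin n) | r₂ < ‖y‖ ∧ ‖y‖ < 2*r₂},
                Real.exp (α * u x))) := by
  have hd : 0 < 1 - 2*δ := by linarith
  have hn3 : (3:ℝ) ≤ n := by exact_mod_cast hn
  have hαd0 : 0 ≤ αd := by
    rw [hαd]; exact div_nonneg (mul_nonneg (by linarith) hδ0) hd.le
  have hp3 : 3 ≤ p := by rw [hp]; linarith
  have hN2 : ((n:ℝ) - 2) * δ = αd * (1 - 2*δ) := by rw [hαd]; field_simp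
  have hN1 : (n:ℝ) - 2 = (p - 2) * (1 - 2*δ) := by
    rw [hp]; linear_combination 2 * hN2
  have hε0 : 0 < (α - αd)/4 := by linarith
  set K1 : ℝ := (α - αd)/4 * (((1 - 2*δ) * ((α - αd)/4))⁻¹) ^ (p/2) with hK1
  set K2 : ℝ := (α - αd)/4 * (p / ((α - αd)/4)) ^ p with hK2
  have hK10 : 0 < K1 := by positivity
  have hK20 : 0 < K2 := by
    have : 0 < p := by linarith
    positivity
  have h2p : (0:ℝ) < 2 ^ p := by positivity
  have hc0 : 0 < (α - αd)/2 := by linarith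
  refine ⟨((α - αd)/2)⁻¹ * (K1 + K2 * 2 ^ p), by positivity, ?_⟩
  intro r₁ r₂ h1 h2 Ω hΩ hsub u G hu hG S hS _ hae
  have h3 : 0 < r₂ := h1.trans h2
  have hu' : ∀ y ∈ Ω, HasFDerivAt u (innerSL ℝ (G y)) y := by
    intro y hy
    refine (hu y hy).hasFDerivAt.congr_fderiv ?_
    ext w; simp
  have hGc : ContinuousOn G Ω := by
    intro y hy
    obtain ⟨s, hs, K, hK⟩ := hG y hy
    exact (hK.continuousOn.continuousAt hs).continuousWithinAt
  have huc : ContinuousOn u Ω := fun y hy => (hu' y hy).continuousAt.continuousWithinAt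
  have hec : ContinuousOn (fun x => Real.exp (α * u x)) Ω := by fun_prop
  let b := EuclideanSpace.basisFun (Fin n) ℝ
  let η : EuclideanSpace ℝ (Fin n) → ℝ := auxEta r₁ r₂
  let X : Fin n → EuclideanSpace ℝ (Fin n) → ℝ := fun i y =>
    ‖G y‖ ^ (p-2) * ⟪G y, b i⟫ * (Real.exp (α * u y) * η y ^ p)
  have hX0 : ∀ i y, ¬ (r₁/2 ≤ ‖y‖ ∧ ‖y‖ ≤ 2*r₂) → X i y = 0 := by
    intro i y hy
    have : η y = 0 := auxEta_zero h1 h2 hy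
    simp [X, this, Real.zero_rpow (by linarith : p ≠ 0)]
  have hXe : ∀ i y, ¬ (r₁/2 ≤ ‖y‖ ∧ ‖y‖ ≤ 2*r₂) → X i =ᶠ[nhds y] fun _ => 0 := by
    intro i y hy
    filter_upwards [(aux_closed (r₁/2) (2*r₂)).isOpen_compl.mem_nhds hy] with z hz
    exact hX0 i z hz
  have hXl : ∀ i, LocallyLipschitz (X i) := by
    intro i y
    by_cases hy : y ∈ Ω
    · exact aux_locLip hΩ hp3 hy hu' hG (auxEta_lip r₁ r₂)
    · refine ⟨0, _, hXe i y (fun h => hy (hsub h)), ?_⟩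
      intro z hz w hw
      simp only [Set.mem_ofPred_eq] at hz hw
      simp [hz, hw]
  have hXc : ∀ i, HasCompactSupport (X i) := fun i =>
    HasCompactSupport.intro (aux_compact (r₁/2) (2*r₂)) fun y hy => hX0 i y hy
  have hD := fun i => aux_div (μ := volume) (hXl i) (hXc i) (b i)
  let D : EuclideanSpace ℝ (Fin n) → ℝ := fun x => ∑ i, lineDeriv ℝ (X i) x (b i)
  have hDi : Integrable D := integrable_finsetSum _ fun i _ => (hD i).1
  have hD0 : ∫ x, D x = 0 := by
    simp only [D]
    rw [integral_finsetSum _ fun i _ => (hD i).1]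
    exact Finset.sum_eq_zero fun i _ => (hD i).2
  -- integrability
  have hInt : ∀ (f : EuclideanSpace ℝ (Fin n) → ℝ) (s t : ℝ), ContinuousOn f Ω → r₁/2 ≤ s →
      t ≤ 2*r₂ → IntegrableOn f {y | s < ‖y‖ ∧ ‖y‖ < t} := by
    intro f s t hf hs ht
    refine ((hf.mono hsub).integrableOn_compact (aux_compact _ _)).mono_set ?_
    intro y hy
    exact ⟨hs.trans hy.1.le, hy.2.le.trans ht⟩
  have hfc : ContinuousOn (fun x => ‖G x‖ ^ p * Real.exp (α * u x)) Ω :=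
    (hGc.norm.rpow_const fun _ _ => Or.inr (by linarith)).mul hec
  have hsc : ContinuousOn (fun x => ‖S x‖ ^ (p/2) * Real.exp (α * u x)) Ω :=
    (hS.norm.rpow_const fun _ _ => Or.inr (by linarith)).mul hec
  have iL := ((hInt _ r₁ r₂ hfc (by linarith) (by linarith)).integrable_indicator
    (aux_open _ _).measurableSet).const_mul ((α - αd)/2)
  have iS := ((hInt _ (r₁/2) (2*r₂) hsc le_rfl le_rfl).integrable_indicator
    (aux_open _ _).measurableSet).const_mul K1
  have iI := ((hInt _ (r₁/2) r₁ hec le_rfl (by linarith)).integrable_indicator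
    (aux_open _ _).measurableSet).const_mul (K2 * (2/r₁) ^ p)
  have iO := ((hInt _ r₂ (2*r₂) hec (by linarith) le_rfl).integrable_indicator
    (aux_open _ _).measurableSet).const_mul (K2 * (2/r₂) ^ p)
  have : Nonempty (Fin n) := ⟨⟨0, by omega⟩⟩
  have hsph : ∀ r : ℝ, ∀ᵐ x : EuclideanSpace ℝ (Fin n), ‖x‖ ≠ r := by
    intro r
    have := Measure.addHaar_sphere (volume : Measure (EuclideanSpace ℝ (Fin n))) 0 r
    rw [measure_eq_zero_iff_ae_notMem] at this
    filter_upwards [this] with x hx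
    simpa using hx
  have hmono := integral_mono_ae iL (((hDi.add iS).add iI).add iO) (by
    filter_upwards [hae, hsph (r₁/2), hsph r₁, hsph r₂, hsph (2*r₂)] with x hx n1 n2 n3 n4
    simp only [Pi.add_apply]
    by_cases hB : r₁/2 < ‖x‖ ∧ ‖x‖ < 2*r₂
    swap
    · have hnot : ¬ (r₁/2 ≤ ‖x‖ ∧ ‖x‖ ≤ 2*r₂) := fun h =>
        hB ⟨lt_of_le_of_ne h.1 n1.symm, lt_of_le_of_ne h.2 n4⟩
      have hDx : D x = 0 := by
        refine Finset.sum_eq_zero fun i _ => ?_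
        rw [(hXe i x hnot).lineDeriv_eq]
        simp [lineDeriv]
      rw [hDx, Set.indicator_of_notMem, Set.indicator_of_notMem, Set.indicator_of_notMem,
        Set.indicator_of_notMem]
      · simp
      · exact fun h => hB ⟨by linarith [h.1], h.2⟩
      · exact fun h => hB ⟨h.1, by linarith [h.2]⟩
      · exact hB
      · exact fun h => hB ⟨by linarith [h.1], by linarith [h.2]⟩
    have hxΩ : x ∈ Ω := hsub ⟨hB.1.le, hB.2.le⟩
    have hx0 : x ≠ 0 := by
      intro h; rw [h, norm_zero] at hB; linarith [hB.1]
    obtain ⟨H, hGH, hH⟩ := hx hB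
    have hηm := auxEta_mem r₁ r₂ x
    have key : ∀ g : EuclideanSpace ℝ (Fin n), HasFDerivAt η (innerSL ℝ g) x →
        (α - αd) / 2 * (‖G x‖ ^ p * Real.exp (α * u x)) * η x ^ p ≤ D x +
          K1 * (‖S x‖ ^ (p/2) * Real.exp (α * u x)) + K2 * ‖g‖ ^ p * Real.exp (α * u x) := by
      intro g hg
      have h := aux_point b (S := S x) (by linarith : 2 < p) hδ hN1 hN2 hα hGH (hu' x hxΩ) hg
        hηm.1 (hH (G x))
      have ht : η x ^ p ≤ 1 := Real.rpow_le_one hηm.1 hηm.2 (by linarith)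
      have hs : 0 ≤ K1 * (‖S x‖ ^ (p/2) * Real.exp (α * u x)) := by positivity
      have h' := mul_le_mul_of_nonneg_left ht hs
      rw [mul_one] at h'
      refine h.trans ?_
      rw [← hK1, ← hK2, mul_assoc K2]
      gcongr
    have hpos : 0 ≤ (α - αd) / 2 * (‖G x‖ ^ p * Real.exp (α * u x)) * η x ^ p :=
      mul_nonneg (by positivity) (Real.rpow_nonneg hηm.1 _)
    have hgp : ∀ (g : EuclideanSpace ℝ (Fin n)) (r : ℝ), 0 < r → ‖g‖ ≤ 2 / r →
        K2 * ‖g‖ ^ p * Real.exp (α * u x) ≤ K2 * (2/r) ^ p * Real.exp (α * u x) := by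
      intro g r hr hg
      have : 0 ≤ p := by linarith
      gcongr
    rw [Set.indicator_of_mem (show x ∈ {y | r₁/2 < ‖y‖ ∧ ‖y‖ < 2*r₂} from hB)]
    rcases lt_or_gt_of_ne n2 with hlt | hgt
    · have hI : r₁/2 < ‖x‖ ∧ ‖x‖ < r₁ := ⟨hB.1, hlt⟩
      obtain ⟨g, hg, hgd⟩ := aux_norm hx0 (2/r₁) (-1)
      have hηd : HasFDerivAt η (innerSL ℝ g) x := by
        refine hgd.congr_of_eventuallyEq ?_
        filter_upwards [(aux_open _ _).mem_nhds hI] with y hy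
        exact auxEta_in h1 h2 hy
      rw [abs_of_nonneg (by positivity)] at hg
      have k1 := key g hηd
      have k2 := hgp g r₁ h1 hg
      rw [Set.indicator_of_mem (show x ∈ {y | r₁/2 < ‖y‖ ∧ ‖y‖ < r₁} from hI),
        Set.indicator_of_notMem (fun h => by linarith [h.1]),
        Set.indicator_of_notMem (fun h => by linarith [h.1])]
      linarith
    rcases lt_or_gt_of_ne n3 with hlt' | hgt'
    · have hM : r₁ < ‖x‖ ∧ ‖x‖ < r₂ := ⟨hgt, hlt'⟩
      have hηd : HasFDerivAt η (innerSL ℝ 0) x := by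
        rw [map_zero]
        refine (hasFDerivAt_const (1:ℝ) x).congr_of_eventuallyEq ?_
        filter_upwards [(aux_open _ _).mem_nhds hM] with y hy
        exact auxEta_mid h1 h2 hy
      have k1 := key 0 hηd
      have hη1 : η x = 1 := auxEta_mid h1 h2 hM
      rw [norm_zero, Real.zero_rpow (by linarith), hη1, Real.one_rpow] at k1
      rw [Set.indicator_of_mem (show x ∈ {y | r₁ < ‖y‖ ∧ ‖y‖ < r₂} from hM),
        Set.indicator_of_notMem (fun h => by linarith [h.2]),
        Set.indicator_of_notMem (fun h => by linarith [h.1])]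
      linarith
    · have hO : r₂ < ‖x‖ ∧ ‖x‖ < 2*r₂ := ⟨hgt', hB.2⟩
      obtain ⟨g, hg, hgd⟩ := aux_norm hx0 (-1/r₂) 2
      have hηd : HasFDerivAt η (innerSL ℝ g) x := by
        refine hgd.congr_of_eventuallyEq ?_
        filter_upwards [(aux_open _ _).mem_nhds hO] with y hy
        exact auxEta_out h1 h2 hy
      have hg2 : ‖g‖ ≤ 2 / r₂ := by
        rw [abs_div, abs_neg, abs_one, abs_of_pos h3] at hg
        refine hg.trans ?_
        gcongr
        norm_num
      have k1 := key g hηd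
      have k2 := hgp g r₂ h3 hg2
      rw [Set.indicator_of_mem (show x ∈ {y | r₂ < ‖y‖ ∧ ‖y‖ < 2*r₂} from hO),
        Set.indicator_of_notMem (fun h => by linarith [h.2]),
        Set.indicator_of_notMem (fun h => by linarith [h.2])]
      linarith)
  rw [integral_add' ((hDi.add iS).add iI) iO, integral_add' (hDi.add iS) iI,
    integral_add' hDi iS, hD0] at hmono
  simp only [integral_const_mul] at hmono
  rw [integral_indicator (aux_open _ _).measurableSet,
    integral_indicator (aux_open _ _).measurableSet,
    integral_indicator (aux_open _ _).measurableSet,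
    integral_indicator (aux_open _ _).measurableSet] at hmono
  have er : ∀ r : ℝ, 0 < r → (2/r) ^ p = 2 ^ p * r ^ (-p) := by
    intro r hr
    rw [Real.div_rpow two_pos.le hr.le, Real.rpow_neg hr.le]; rfl
  rw [er r₁ h1, er r₂ h3] at hmono
  have pS : 0 ≤ ∫ x in {y : EuclideanSpace ℝ (Fin n) | r₁/2 < ‖y‖ ∧ ‖y‖ < 2*r₂},
                ‖S x‖ ^ (p/2) * Real.exp (α * u x) :=
    integral_nonneg fun x => by positivity
  have pI : 0 ≤ r₁ ^ (-p) * ∫ x in {y : EuclideanSpace ℝ (Fin n) | r₁/2 < ‖y‖ ∧ ‖y‖ < r₁},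
                Real.exp (α * u x) :=
    mul_nonneg (by positivity) (integral_nonneg fun x => by positivity)
  have pO : 0 ≤ r₂ ^ (-p) * ∫ x in {y : EuclideanSpace ℝ (Fin n) | r₂ < ‖y‖ ∧ ‖y‖ < 2*r₂},
                Real.exp (α * u x) :=
    mul_nonneg (by positivity) (integral_nonneg fun x => by positivity)
  rw [mul_assoc, inv_mul_eq_div, le_div_iff₀ hc0]
  have q1 := mul_nonneg (mul_nonneg hK20.le h2p.le) pS
  have q2 := mul_nonneg hK10.le pI
  have q3 := mul_nonneg hK10.le pO
  linarith
end

section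
/- Let n ≥ 3, R₀ > 0, and C_S ≥ 0. Let u : {x ∈ ℝⁿ : |x| > R₀} → ℝ be bounded and continuously differentiable with locally Lipschitz gradient, and let S be a continuous map from {|x| > R₀} to the symmetric n×n real matrices with operator norm bound ‖S(x)‖ ≤ C_S·|x|^{−4}. Assume that for almost every x with |x| > R₀, ∇u is differentiable at x with derivative matrix H(x), and for every v ∈ ℝⁿ: (n−2)⟨H(x)v, v⟩ + (tr H(x))|v|² + (n−2)⟨∇u(x), v⟩² − (n−2)|∇u(x)|²|v|² + ⟨S(x)v, v⟩ ≥ 0. Then ∫_{|x| > 2R₀} |∇u(x)|ⁿ dx < ∞. -/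
open MeasureTheory RealInnerProductSpace
open Filter Topology

def LLA {E F : Type*} [PseudoEMetricSpace E] [PseudoEMetricSpace F] (f : E → F) (x : E) : Prop :=
  ∃ K, ∃ s ∈ 𝓝 x, LipschitzOnWith K f s

lemma LLA.comp' {E F F' : Type*} [PseudoEMetricSpace E] [PseudoEMetricSpace F]
    [PseudoEMetricSpace F'] {g : F → F'} {f : E → F} {x : E}
    (hg : LLA g (f x)) (hf : LLA f x) : LLA (fun y => g (f y)) x := by
  obtain ⟨K, s, hs, h⟩ := hf
  obtain ⟨K', s', hs', h'⟩ := hg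
  have hc : ContinuousAt f x := h.continuousOn.continuousAt hs
  refine ⟨K' * K, s ∩ f ⁻¹' s', inter_mem hs (hc hs'), ?_⟩
  exact h'.comp (h.mono Set.inter_subset_left) (fun y hy => hy.2)

lemma LLA.prod' {E F F' : Type*} [PseudoEMetricSpace E] [PseudoEMetricSpace F]
    [PseudoEMetricSpace F'] {g : E → F'} {f : E → F} {x : E}
    (hf : LLA f x) (hg : LLA g x) : LLA (fun y => (f y, g y)) x := by
  obtain ⟨K, s, hs, h⟩ := hf
  obtain ⟨K', s', hs', h'⟩ := hg
  exact ⟨max K K', s ∩ s', inter_mem hs hs',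
    (h.mono Set.inter_subset_left).prodMk (h'.mono Set.inter_subset_right)⟩

lemma LLA.of_contDiffAt {E F : Type*} [NormedAddCommGroup E] [NormedSpace ℝ E]
    [NormedAddCommGroup F] [NormedSpace ℝ F] {f : E → F} {x : E} (h : ContDiffAt ℝ 1 f x) :
    LLA f x := by
  obtain ⟨K, t, ht, h⟩ := h.exists_lipschitzOnWith
  exact ⟨K, t, ht, h⟩

lemma LLA.smul' {E F : Type*} [NormedAddCommGroup E] [NormedSpace ℝ E]
    [NormedAddCommGroup F] [NormedSpace ℝ F] {f : E → ℝ} {g : E → F} {x : E}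
    (hf : LLA f x) (hg : LLA g x) : LLA (fun y => f y • g y) x := by
  have h : LLA (fun p : ℝ × F => p.1 • p.2) (f x, g x) :=
    LLA.of_contDiffAt (contDiff_fst.smul contDiff_snd).contDiffAt
  exact LLA.comp' (g := fun p : ℝ × F => p.1 • p.2) (f := fun y => (f y, g y)) h (hf.prod' hg)

lemma LLA.norm' {E F : Type*} [NormedAddCommGroup E]
    [NormedAddCommGroup F] {g : E → F} {x : E}
    (hg : LLA g x) : LLA (fun y => ‖g y‖) x :=
  LLA.comp' (g := fun p : F => ‖p‖) ⟨1, Set.univ, univ_mem, lipschitzWith_one_norm.lipschitzOnWith⟩ hg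

lemma LLA.pow' {E : Type*} [NormedAddCommGroup E] {g : E → ℝ} {x : E}
    (hg : LLA g x) (k : ℕ) : LLA (fun y => g y ^ k) x :=
  LLA.comp' (g := fun p : ℝ => p ^ k) (LLA.of_contDiffAt (by fun_prop)) hg

lemma lipschitz_of_LLA {E F : Type*} [NormedAddCommGroup E] [NormedSpace ℝ E] [ProperSpace E]
    [NormedAddCommGroup F] {f : E → F} (h : ∀ x, LLA f x) (hc : HasCompactSupport f) :
    ∃ K, LipschitzWith K f := by
  have hl : LocallyLipschitz f := h
  obtain ⟨r, hr⟩ := hc.isCompact.isBounded.subset_closedBall (0 : E)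
  obtain ⟨K, hK⟩ := LocallyLipschitzOn.exists_lipschitzOnWith_of_compact
    (isCompact_closedBall (0 : E) (r + 1)) (hl.locallyLipschitzOn)
  obtain ⟨C, hC⟩ := hc.exists_bound_of_continuous hl.continuous
  have h0 : ∀ y, r < ‖y‖ → f y = 0 := by
    intro y hy
    by_contra hne
    have := hr (subset_tsupport f hne)
    simp at this
    linarith
  have hC0 : 0 ≤ C := (norm_nonneg _).trans (hC 0)
  have key : ∀ x y, ‖x‖ ≤ r + 1 → r + 1 < ‖y‖ → dist (f x) (f y) ≤ C * dist x y := by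
    intro x y hx hy
    rw [h0 y (by linarith)]
    by_cases hxr : r < ‖x‖
    · rw [h0 x hxr]; simp; positivity
    · have h1 : 1 ≤ dist x y := by
        rw [dist_eq_norm, norm_sub_rev]
        have := norm_sub_norm_le y x
        linarith
      have := hC x
      rw [dist_zero_right]
      nlinarith
  refine ⟨K + C.toNNReal, LipschitzWith.of_dist_le_mul fun x y => ?_⟩
  have hd : 0 ≤ dist x y := dist_nonneg
  have hK0 := K.2
  push_cast
  rw [Real.coe_toNNReal _ hC0, add_mul]
  have a1 : 0 ≤ (K : ℝ) * dist x y := by positivity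
  have a2 : 0 ≤ C * dist x y := by positivity
  rcases le_or_gt ‖x‖ (r+1) with hx | hx <;> rcases le_or_gt ‖y‖ (r+1) with hy | hy
  · have := hK.dist_le_mul x (by simpa using hx) y (by simpa using hy)
    linarith
  · linarith [key x y hx hy]
  · have := key y x hy hx
    rw [dist_comm, dist_comm y x] at this
    linarith
  · rw [h0 x (by linarith), h0 y (by linarith)]
    simp; linarith

/-- divergence theorem -/
lemma integral_div_eq_zero {n : ℕ} (X : EuclideanSpace ℝ (Fin n) → EuclideanSpace ℝ (Fin n))
    {K} (hX : LipschitzWith K X) (hc : HasCompactSupport X) :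
    Integrable (fun x => LinearMap.trace ℝ _ (fderiv ℝ X x).toLinearMap) volume ∧
    ∫ x, LinearMap.trace ℝ _ (fderiv ℝ X x).toLinearMap = 0 := by
  let b := EuclideanSpace.basisFun (Fin n) ℝ
  let f : Fin n → EuclideanSpace ℝ (Fin n) → ℝ := fun i x => ⟪b i, X x⟫
  have hlip : ∀ i, ∃ C, LipschitzWith C (f i) := fun i =>
    ⟨_, (innerSL ℝ (b i)).lipschitz.comp hX⟩
  have hfc : ∀ i, HasCompactSupport (f i) := fun i =>
    hc.comp_left (g := fun v => ⟪b i, v⟫) (by simp)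
  have heq : (fun x => LinearMap.trace ℝ _ (fderiv ℝ X x).toLinearMap) =ᵐ[volume]
      fun x => ∑ i, lineDeriv ℝ (f i) x (b i) := by
    filter_upwards [hX.ae_differentiableAt (μ := volume)] with x hx
    rw [LinearMap.trace_eq_sum_inner _ b]
    refine Finset.sum_congr rfl fun i _ => ?_
    have h1 : HasFDerivAt (f i) ((innerSL ℝ (b i)).comp (fderiv ℝ X x)) x :=
      (innerSL ℝ (b i)).hasFDerivAt.comp x hx.hasFDerivAt
    rw [(h1.hasLineDerivAt (b i)).lineDeriv]
    rfl
  have hint : ∀ i, Integrable (fun x => lineDeriv ℝ (f i) x (b i)) volume := by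
    intro i
    obtain ⟨C, hC⟩ := hlip i
    have hs : HasCompactSupport (fun x => lineDeriv ℝ (f i) x (b i)) := by
      refine (hfc i).mono' (fun x hx => ?_)
      by_contra hxn
      apply hx
      have : f i =ᶠ[𝓝 x] fun _ => 0 := notMem_tsupport_iff_eventuallyEq.mp hxn
      show lineDeriv ℝ (f i) x (b i) = 0
      rw [Filter.EventuallyEq.lineDeriv_eq this]
      simp [lineDeriv]
    have := (hC.locallyIntegrable_lineDeriv (μ := volume) (b i)).integrableOn_isCompact hs.isCompact
    rwa [integrableOn_iff_integrable_of_support_subset (subset_tsupport _)] at this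
  have hz : ∀ i, ∫ x, lineDeriv ℝ (f i) x (b i) = 0 := by
    intro i
    obtain ⟨C, hC⟩ := hlip i
    have := (LipschitzWith.const (1 : ℝ) : LipschitzWith 0 (fun _ : EuclideanSpace ℝ (Fin n) => (1:ℝ))).integral_lineDeriv_mul_eq (μ := volume) hC (hfc i) (- b i)
    simpa [lineDeriv] using this.symm
  refine ⟨(integrable_finsetSum _ fun i _ => hint i).congr heq.symm, ?_⟩
  rw [integral_congr_ae heq, integral_finsetSum _ (fun i _ => hint i)]
  simp [hz]

lemma hasFDerivAt_pow_smul {E : Type*} [NormedAddCommGroup E] [InnerProductSpace ℝ E]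
    [FiniteDimensional ℝ E]
    {G : E → E} {H : E →L[ℝ] E} {x : E} (k : ℕ) (c : ℝ) (hG : HasFDerivAt G H x)
    (hH : 0 ≤ (k + 1) * ⟪H (G x), G x⟫ + LinearMap.trace ℝ _ H.toLinearMap * ‖G x‖ ^ 2
      + c * ‖G x‖ ^ 2) :
    ∃ L : E →L[ℝ] E, HasFDerivAt (fun y => ‖G y‖ ^ (k + 1) • G y) L x ∧
      -(c * ‖G x‖ ^ (k + 1)) ≤ LinearMap.trace ℝ _ L.toLinearMap := by
  by_cases h0 : G x = 0
  · refine ⟨0, ?_, by simp [h0]⟩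
    rw [hasFDerivAt_iff_isLittleO]
    have h1 : (fun y => G y) =O[𝓝 x] fun y => y - x := by
      have := hG.isBigO_sub
      simpa [h0] using this
    have h2 : (fun y => ‖G y‖ ^ (k + 1)) =o[𝓝 x] fun _ => (1 : ℝ) := by
      rw [Asymptotics.isLittleO_one_iff]
      have : Tendsto (fun y => ‖G y‖ ^ (k + 1)) (𝓝 x) (𝓝 (‖G x‖ ^ (k + 1))) :=
        (hG.continuousAt.norm.pow (k + 1)).tendsto
      simpa [h0] using this
    simpa [h0] using h2.smul_isBigO h1
  · have hpos : 0 < ‖G x‖ := norm_pos_iff.mpr h0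
    have hn : HasFDerivAt (fun y => ‖G y‖) ((‖G x‖⁻¹ • innerSL ℝ (G x)).comp H) x := by
      have hh : HasFDerivAt (fun y => ‖G y‖ ^ 2) (2 • (innerSL ℝ (G x)).comp H) x := hG.norm_sq
      have := hh.sqrt (by positivity)
      simp only [Real.sqrt_sq (norm_nonneg _)] at this
      refine this.congr_fderiv ?_
      ext v
      simp
      field_simp
    have hp := (hn.pow (k + 1)).smul hG
    refine ⟨_, hp, ?_⟩
    have htr : LinearMap.trace ℝ E (‖G x‖ ^ (k+1) • H + (((k+1 : ℕ) • ‖G x‖ ^ k) • ((‖G x‖⁻¹ • innerSL ℝ (G x)).comp H)).smulRight (G x) : E →L[ℝ] E).toLinearMap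
       = ‖G x‖ ^ (k+1) * LinearMap.trace ℝ E H.toLinearMap + (k+1) * ‖G x‖ ^ k * (‖G x‖⁻¹ * ⟪G x, H (G x)⟫) := by
      have : (‖G x‖ ^ (k+1) • H + (((k+1 : ℕ) • ‖G x‖ ^ k) • ((‖G x‖⁻¹ • innerSL ℝ (G x)).comp H)).smulRight (G x) : E →L[ℝ] E).toLinearMap
        = ‖G x‖ ^ (k+1) • H.toLinearMap + (((k+1 : ℕ) • ‖G x‖ ^ k) • ((‖G x‖⁻¹ • innerSL ℝ (G x)).comp H)).toLinearMap.smulRight (G x) := rfl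
      rw [this, map_add, map_smul, LinearMap.trace_smulRight]
      simp
    refine le_of_le_of_eq ?_ (Eq.trans htr.symm ?_)
    · rw [real_inner_comm] at hH
      have h3 := mul_nonneg (by positivity : 0 ≤ ‖G x‖ ^ k * ‖G x‖⁻¹) hH
      have e : ‖G x‖ ^ k * ‖G x‖⁻¹ * ((k + 1) * ⟪G x, H (G x)⟫ + LinearMap.trace ℝ _ H.toLinearMap * ‖G x‖ ^ 2
      + c * ‖G x‖ ^ 2) = ‖G x‖ ^ (k+1) * LinearMap.trace ℝ E H.toLinearMap + (k+1) * ‖G x‖ ^ k * (‖G x‖⁻¹ * ⟪G x, H (G x)⟫) + c * ‖G x‖ ^ (k+1) := by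
        field_simp
        ring
      linarith
    · simp

lemma young1 (j : ℕ) {a b : ℝ} (ha : 0 ≤ a) (hb : 0 ≤ b) :
    a ^ j * b ≤ a ^ (j + 1) / 4 + 4 ^ j * b ^ (j + 1) := by
  rcases le_total b (a / 4) with h | h
  · have : a ^ j * b ≤ a ^ j * (a / 4) := by gcongr
    have h2 : 0 ≤ 4 ^ j * b ^ (j + 1) := by positivity
    rw [pow_succ]
    linarith
  · have : a ^ j * b ≤ (4 * b) ^ j * b := by gcongr; linarith
    have h2 : 0 ≤ a ^ (j + 1) := by positivity
    rw [mul_pow, mul_assoc, ← pow_succ] at this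
    linarith

lemma young2 (j : ℕ) {a b : ℝ} (ha : 0 ≤ a) (hb : 0 ≤ b) :
    a ^ j * b ^ 2 ≤ a ^ (j + 2) / 4 + 2 ^ j * b ^ (j + 2) := by
  rcases le_total b (a / 2) with h | h
  · have : a ^ j * b ^ 2 ≤ a ^ j * (a / 2) ^ 2 := by gcongr
    have h2 : 0 ≤ 2 ^ j * b ^ (j + 2) := by positivity
    rw [pow_add]
    linarith
  · have : a ^ j * b ^ 2 ≤ (2 * b) ^ j * b ^ 2 := by gcongr; linarith
    have h2 : 0 ≤ a ^ (j + 2) := by positivity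
    rw [mul_pow, mul_assoc, ← pow_add] at this
    linarith

lemma alg_est (k : ℕ) {p s d m q e : ℝ} (hp : 0 ≤ p) (hp1 : p ≤ 1) (hs : 0 ≤ s) (hd : 0 ≤ d)
    (hm : 0 ≤ m) (he : 0 ≤ e) (hq : m * q ≤ e ^ 2) :
    m * ((k + 3 : ℕ) * p ^ (k + 2)) * d * s ^ (k + 2) + m * (p ^ (k + 3) * (q * s ^ (k + 1)))
      ≤ p ^ (k + 3) * s ^ (k + 3) / 2
        + 4 ^ (k + 2) * (m * (k + 3 : ℕ)) ^ (k + 3) * d ^ (k + 3) + 2 ^ (k + 1) * e ^ (k + 3) := by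
  have h1 := young1 (k + 2) (mul_nonneg hp hs) (b := m * (k + 3 : ℕ) * d) (by positivity)
  have h2 := young2 (k + 1) (mul_nonneg hp hs) he
  have h3 : m * (p ^ (k + 3) * (q * s ^ (k + 1))) ≤ (p * s) ^ (k + 1) * e ^ 2 := by
    calc m * (p ^ (k + 3) * (q * s ^ (k + 1))) = (p * s) ^ (k + 1) * p ^ 2 * (m * q) := by ring
      _ ≤ (p * s) ^ (k + 1) * p ^ 2 * e ^ 2 := by gcongr
      _ ≤ (p * s) ^ (k + 1) * 1 * e ^ 2 := by
          gcongr
          nlinarith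
      _ = _ := by ring
  have e1 : m * ((k + 3 : ℕ) * p ^ (k + 2)) * d * s ^ (k + 2)
      = (p * s) ^ (k + 2) * (m * (k + 3 : ℕ) * d) := by ring
  rw [e1]
  have e2 : (p * s) ^ (k + 3) = p ^ (k + 3) * s ^ (k + 3) := mul_pow _ _ _
  have e3 : (m * (k + 3 : ℕ) * d) ^ (k + 3) = (m * (k + 3 : ℕ)) ^ (k + 3) * d ^ (k + 3) :=
    mul_pow _ _ _
  rw [show k + 2 + 1 = k + 3 from rfl, e2, e3] at h1
  rw [show k + 1 + 2 = k + 3 from rfl, e2] at h2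
  linarith

lemma key_est (k : ℕ) (R₀ C_S : ℝ) (hR₀ : 0 < R₀) (hC_S : 0 ≤ C_S)
    (u : EuclideanSpace ℝ (Fin (k+3)) → ℝ)
    (G : EuclideanSpace ℝ (Fin (k+3)) → EuclideanSpace ℝ (Fin (k+3)))
    (M : ℝ) (hM : 0 ≤ M)
    (hubd : ∀ x : EuclideanSpace ℝ (Fin (k+3)), R₀ < ‖x‖ → |u x| ≤ M)
    (hgrad : ∀ x : EuclideanSpace ℝ (Fin (k+3)), R₀ < ‖x‖ → HasGradientAt u (G x) x)
    (hlip : ∀ x : EuclideanSpace ℝ (Fin (k+3)), R₀ < ‖x‖ → LLA G x)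
    (hae : ∀ᵐ x : EuclideanSpace ℝ (Fin (k+3)) ∂volume, R₀ < ‖x‖ →
      ∃ H : EuclideanSpace ℝ (Fin (k+3)) →L[ℝ] EuclideanSpace ℝ (Fin (k+3)),
        HasFDerivAt G H x ∧ 0 ≤ ((k : ℝ) + 1) * ⟪H (G x), G x⟫ +
        LinearMap.trace ℝ _ H.toLinearMap * ‖G x‖ ^ 2 + (C_S / ‖x‖ ^ 4) * ‖G x‖ ^ 2) :
    ∃ C₁ C₂ : ℝ, 0 ≤ C₁ ∧ 0 ≤ C₂ ∧ ∀ φ : EuclideanSpace ℝ (Fin (k+3)) → ℝ, ContDiff ℝ 1 φ →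
      HasCompactSupport φ → (∀ x, 0 ≤ φ x) → (∀ x, φ x ≤ 1) →
      (∀ x ∈ tsupport φ, R₀ < ‖x‖) →
      ∀ N : EuclideanSpace ℝ (Fin (k+3)) → ℝ, Integrable N volume →
      (∀ x, ‖fderiv ℝ φ x‖ ^ (k + 3) ≤ N x) →
      ∫⁻ x, ENNReal.ofReal (φ x ^ (k + 3) * ‖G x‖ ^ (k + 3) / 2)
        ≤ ENNReal.ofReal (C₁ * (∫ x, N x) + C₂) := by
  set D := Real.sqrt (2 * M * C_S) with hD
  set A := 1 / R₀ + 1 with hA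
  have hA0 : 0 < A := by positivity
  have hW : Integrable (fun x : EuclideanSpace ℝ (Fin (k+3)) =>
      (1 + ‖x‖) ^ (-((2 * (k + 3) : ℕ) : ℝ))) volume := by
    apply integrable_one_add_norm
    simp
    nlinarith [(Nat.cast_nonneg k : (0:ℝ) ≤ k)]
  have hW' : ∀ x : EuclideanSpace ℝ (Fin (k+3)), (1 + ‖x‖) ^ (-((2 * (k + 3) : ℕ) : ℝ))
      = ((1 + ‖x‖) ^ (2 * (k + 3)))⁻¹ := by
    intro x
    rw [Real.rpow_neg (by positivity), Real.rpow_natCast]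
  simp only [hW'] at hW
  set W : EuclideanSpace ℝ (Fin (k+3)) → ℝ := fun x => ((1 + ‖x‖) ^ (2 * (k + 3)))⁻¹ with hWdef
  have hWnn : ∀ x, 0 ≤ W x := fun x => by positivity
  set c₁ : ℝ := 4 ^ (k + 2) * (2 * M * (k + 3 : ℕ)) ^ (k + 3) with hc₁
  set c₂ : ℝ := 2 ^ (k + 1) * (D * A ^ 2) ^ (k + 3) with hc₂
  have hD0 : 0 ≤ D := Real.sqrt_nonneg _
  have hc₁0 : 0 ≤ c₁ := by positivity
  have hc₂0 : 0 ≤ c₂ := by positivity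
  refine ⟨c₁, c₂ * ∫ x, W x, hc₁0, mul_nonneg hc₂0 (integral_nonneg hWnn), ?_⟩
  intro φ hφ hφc hφ0 hφ1 hφs N hN hNb
  have hopen : IsOpen {x : EuclideanSpace ℝ (Fin (k+3)) | R₀ < ‖x‖} :=
    isOpen_lt continuous_const continuous_norm
  set X : EuclideanSpace ℝ (Fin (k+3)) → EuclideanSpace ℝ (Fin (k+3)) := fun x =>
    (φ x ^ (k + 3) * (u x + M)) • (‖G x‖ ^ (k + 1) • G x) with hX
  have hXz : ∀ x, x ∉ tsupport φ → X =ᶠ[𝓝 x] fun _ => 0 := by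
    intro x hx
    filter_upwards [notMem_tsupport_iff_eventuallyEq.mp hx] with y hy
    simp [hX, hy]
  have hXc : HasCompactSupport X := by
    refine hφc.mono (fun x hx => ?_)
    intro h
    apply hx
    simp [hX, h]
  have hXl : ∀ x, LLA X x := by
    intro x
    by_cases hx : x ∈ tsupport φ
    · have hxR := hφs x hx
      have hu : LLA u x := by
        apply LLA.of_contDiffAt
        rw [contDiffAt_one_iff]
        refine ⟨fun y => innerSL ℝ (G y), {x | R₀ < ‖x‖}, hopen.mem_nhds hxR, ?_, ?_⟩
        · refine (innerSL ℝ).continuous.comp_continuousOn ?_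
          intro y hy
          obtain ⟨K, s, hs, h⟩ := hlip y hy
          exact (h.continuousOn.continuousAt hs).continuousWithinAt
        · intro y hy
          exact (hgrad y hy).hasFDerivAt
      have huM : LLA (fun y => u y + M) x :=
        LLA.comp' (g := fun t : ℝ => t + M) (LLA.of_contDiffAt (by fun_prop)) hu
      have h1 : LLA (fun y => φ y ^ (k + 3)) x := (LLA.of_contDiffAt hφ.contDiffAt).pow' _
      exact (h1.smul' huM).smul' (((hlip x hxR).norm'.pow' _).smul' (hlip x hxR))
    · refine ⟨0, _, hXz x hx, ?_⟩
      intro a ha b hb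
      have ha' : X a = 0 := ha
      have hb' : X b = 0 := hb
      simp [ha', hb']
  obtain ⟨K, hK⟩ := lipschitz_of_LLA hXl hXc
  obtain ⟨hTi, hT0⟩ := integral_div_eq_zero X hK hXc
  have hN0 : ∀ x, 0 ≤ N x := fun x => le_trans (by positivity) (hNb x)
  have hpt : ∀ᵐ x, φ x ^ (k + 3) * ‖G x‖ ^ (k + 3) / 2 ≤
      LinearMap.trace ℝ _ (fderiv ℝ X x).toLinearMap + c₁ * N x + c₂ * W x := by
    filter_upwards [hae] with x hx
    by_cases hxs : x ∈ tsupport φ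
    · have hxR := hφs x hxs
      obtain ⟨H, hH, hineq⟩ := hx hxR
      obtain ⟨L, hL, htr⟩ := hasFDerivAt_pow_smul k (C_S / ‖x‖ ^ 4) hH hineq
      have hφd : HasFDerivAt φ (fderiv ℝ φ x) x :=
        (hφ.differentiable (by simp) x).hasFDerivAt
      have hud : HasFDerivAt (fun y => u y + M) (innerSL ℝ (G x)) x :=
        (hgrad x hxR).hasFDerivAt.add_const M
      have hζ := (hφd.pow (k + 3)).mul hud
      have hXd := hζ.smul hL
      have hXf := hXd.fderiv
      set ζ' := (φ x ^ (k + 3) • innerSL ℝ (G x) +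
        (u x + M) • ((k + 3 : ℕ) • φ x ^ (k + 2)) • fderiv ℝ φ x) with hζ'
      have htrX : LinearMap.trace ℝ _ (fderiv ℝ X x).toLinearMap
          = (φ x ^ (k + 3) * (u x + M)) * LinearMap.trace ℝ _ L.toLinearMap
            + ζ' (‖G x‖ ^ (k + 1) • G x) := by
        have : fderiv ℝ X x = (φ x ^ (k + 3) * (u x + M)) • L
            + ζ'.smulRight (‖G x‖ ^ (k + 1) • G x) := hXf
        rw [this]
        have h2 : ((φ x ^ (k + 3) * (u x + M)) • L
            + ζ'.smulRight (‖G x‖ ^ (k + 1) • G x)).toLinearMap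
            = (φ x ^ (k + 3) * (u x + M)) • L.toLinearMap
            + ζ'.toLinearMap.smulRight (‖G x‖ ^ (k + 1) • G x) := rfl
        rw [h2, map_add, map_smul, LinearMap.trace_smulRight]
        rfl
      have hζv : ζ' (‖G x‖ ^ (k + 1) • G x) = φ x ^ (k + 3) * ‖G x‖ ^ (k + 3)
          + (u x + M) * ((k + 3 : ℕ) * φ x ^ (k + 2)) *
            fderiv ℝ φ x (‖G x‖ ^ (k + 1) • G x) := by
        simp only [hζ', add_apply, smul_apply,
          innerSL_apply_apply, inner_smul_right, real_inner_self_eq_norm_sq, smul_eq_mul,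
          nsmul_eq_mul]
        ring
      have hub := abs_le.mp (hubd x hxR)
      have hu0 : 0 ≤ u x + M := by linarith
      have hu2 : u x + M ≤ 2 * M := by linarith
      have hdφ : -(‖fderiv ℝ φ x‖ * ‖G x‖ ^ (k + 2)) ≤
          fderiv ℝ φ x (‖G x‖ ^ (k + 1) • G x) := by
        have h1 := (fderiv ℝ φ x).le_opNorm (‖G x‖ ^ (k + 1) • G x)
        rw [norm_smul, norm_pow, norm_norm, ← pow_succ] at h1
        exact (abs_le.mp h1).1
      have hp0 := hφ0 x
      have hx0 : 0 < ‖x‖ := hR₀.trans hxR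
      have hal := alg_est k (hφ0 x) (hφ1 x) (norm_nonneg (G x)) (norm_nonneg (fderiv ℝ φ x))
        (m := 2 * M) (q := C_S / ‖x‖ ^ 4) (e := D * A ^ 2 * ((1 + ‖x‖) ^ 2)⁻¹)
        (by positivity) (by positivity) (by
          have hDs : D ^ 2 = 2 * M * C_S := Real.sq_sqrt (by positivity)
          have hAx : 1 + ‖x‖ ≤ A * ‖x‖ := by
            rw [hA, add_mul, one_mul]
            have : 1 ≤ 1 / R₀ * ‖x‖ := by
              rw [one_div, ← div_eq_inv_mul, one_le_div hR₀]; exact hxR.le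
            linarith
          have h4 : (1 + ‖x‖) ^ 4 ≤ (A * ‖x‖) ^ 4 := by gcongr
          rw [mul_pow, mul_pow, hDs, inv_pow, ← mul_div_assoc, ← div_eq_mul_inv,
            div_le_div_iff₀ (by positivity) (by positivity)]
          have : 2 * M * C_S * (1 + ‖x‖) ^ 4 ≤ 2 * M * C_S * (A * ‖x‖) ^ 4 := by gcongr
          calc _ = 2 * M * C_S * (1 + ‖x‖) ^ 4 := by ring
            _ ≤ _ := this
            _ = _ := by ring)
      have hWe : 2 ^ (k + 1) * (D * A ^ 2 * ((1 + ‖x‖) ^ 2)⁻¹) ^ (k + 3) = c₂ * W x := by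
        simp only [hc₂, hWdef, mul_pow, inv_pow, pow_mul]
        ring
      rw [hWe] at hal
      have t1 : -(2 * M * (φ x ^ (k + 3) * (C_S / ‖x‖ ^ 4 * ‖G x‖ ^ (k + 1)))) ≤
          (φ x ^ (k + 3) * (u x + M)) * LinearMap.trace ℝ _ L.toLinearMap := by
        have a1 := mul_le_mul_of_nonneg_left htr (mul_nonneg (pow_nonneg hp0 (k + 3)) hu0)
        have a2 : (u x + M) * (φ x ^ (k + 3) * (C_S / ‖x‖ ^ 4 * ‖G x‖ ^ (k + 1))) ≤
          2 * M * (φ x ^ (k + 3) * (C_S / ‖x‖ ^ 4 * ‖G x‖ ^ (k + 1))) := by gcongr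
        refine le_trans ?_ a1
        calc _ ≤ -((u x + M) * (φ x ^ (k + 3) * (C_S / ‖x‖ ^ 4 * ‖G x‖ ^ (k + 1)))) :=
              neg_le_neg a2
          _ = _ := by ring
      have t2 : -(2 * M * ((k + 3 : ℕ) * φ x ^ (k + 2)) * ‖fderiv ℝ φ x‖ * ‖G x‖ ^ (k + 2)) ≤
          (u x + M) * ((k + 3 : ℕ) * φ x ^ (k + 2)) *
            fderiv ℝ φ x (‖G x‖ ^ (k + 1) • G x) := by
        have hw : 0 ≤ ((k + 3 : ℕ) : ℝ) * φ x ^ (k + 2) := by positivity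
        have a1 := mul_le_mul_of_nonneg_left hdφ (mul_nonneg hu0 hw)
        have a2 : (u x + M) * (((k + 3 : ℕ) * φ x ^ (k + 2)) * (‖fderiv ℝ φ x‖ * ‖G x‖ ^ (k + 2)))
          ≤ 2 * M * (((k + 3 : ℕ) * φ x ^ (k + 2)) * (‖fderiv ℝ φ x‖ * ‖G x‖ ^ (k + 2))) := by
          gcongr
        refine le_trans ?_ a1
        calc _ = -(2 * M * (((k + 3 : ℕ) * φ x ^ (k + 2)) *
              (‖fderiv ℝ φ x‖ * ‖G x‖ ^ (k + 2)))) := by ring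
          _ ≤ _ := neg_le_neg a2
          _ = _ := by ring
      have t3 : c₁ * ‖fderiv ℝ φ x‖ ^ (k + 3) ≤ c₁ * N x :=
        mul_le_mul_of_nonneg_left (hNb x) hc₁0
      rw [htrX, hζv]
      linarith
    · have h0 : φ x = 0 := image_eq_zero_of_notMem_tsupport hxs
      have hf : fderiv ℝ X x = 0 := by
        rw [(hXz x hxs).fderiv_eq]; simp
      rw [hf, h0]
      have := mul_nonneg hc₁0 (hN0 x)
      have := mul_nonneg hc₂0 (hWnn x)
      simp
      linarith
  have hint : Integrable (fun x => LinearMap.trace ℝ _ (fderiv ℝ X x).toLinearMap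
      + c₁ * N x + c₂ * W x) volume := (hTi.add (hN.const_mul _)).add (hW.const_mul _)
  have hval : ∫ x, (LinearMap.trace ℝ _ (fderiv ℝ X x).toLinearMap + c₁ * N x + c₂ * W x)
      = c₁ * (∫ x, N x) + c₂ * ∫ x, W x := by
    have hTN : Integrable (fun x => LinearMap.trace ℝ _ (fderiv ℝ X x).toLinearMap
        + c₁ * N x) volume := hTi.add (hN.const_mul _)
    rw [integral_add hTN (hW.const_mul _),
      integral_add hTi (hN.const_mul _), hT0, integral_const_mul, integral_const_mul, zero_add]
  rw [← hval, ofReal_integral_eq_lintegral_ofReal hint]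
  · refine lintegral_mono_ae ?_
    filter_upwards [hpt] with x hx
    exact ENNReal.ofReal_le_ofReal hx
  · filter_upwards [hpt] with x hx
    have := hφ0 x
    exact le_trans (by positivity) hx

lemma cutoff (k : ℕ) (R₀ : ℝ) (hR₀ : 0 < R₀) :
    ∃ I : ℝ, ∀ j : ℕ, ∃ φ : EuclideanSpace ℝ (Fin (k+3)) → ℝ, ContDiff ℝ 1 φ ∧
      HasCompactSupport φ ∧ (∀ x, 0 ≤ φ x) ∧ (∀ x, φ x ≤ 1) ∧
      (∀ x ∈ tsupport φ, R₀ < ‖x‖) ∧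
      (∀ x, 2 * R₀ < ‖x‖ → ‖x‖ < (j : ℝ) + 1 → φ x = 1) ∧
      ∃ N : EuclideanSpace ℝ (Fin (k+3)) → ℝ, Integrable N volume ∧
      (∀ x, ‖fderiv ℝ φ x‖ ^ (k + 3) ≤ N x) ∧ ∫ x, N x = I := by
  let b : ContDiffBump (0 : EuclideanSpace ℝ (Fin (k+3))) :=
    ⟨3 / 2 * R₀, 2 * R₀, by positivity, by linarith⟩
  let χ : ContDiffBump (0 : EuclideanSpace ℝ (Fin (k+3))) := ⟨1, 2, by norm_num, by norm_num⟩
  have hint : ∀ f : ContDiffBump (0 : EuclideanSpace ℝ (Fin (k+3))),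
      Integrable (fun x => ‖fderiv ℝ f x‖ ^ (k + 3)) volume := by
    intro f
    refine Continuous.integrable_of_hasCompactSupport ?_ ?_
    · exact ((f.contDiff (n := 1)).continuous_fderiv (by simp)).norm.pow _
    · exact (f.hasCompactSupport.fderiv ℝ).comp_left (g := fun L => ‖L‖ ^ (k + 3)) (by simp)
  refine ⟨2 ^ (k + 2) * ((∫ x, ‖fderiv ℝ b x‖ ^ (k + 3)) + ∫ x, ‖fderiv ℝ χ x‖ ^ (k + 3)), ?_⟩
  intro j
  set c : ℝ := ((j : ℝ) + 1)⁻¹ with hc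
  have hc0 : 0 < c := by positivity
  have hsm : ContDiff ℝ 1 (fun x : EuclideanSpace ℝ (Fin (k+3)) => χ (c • x)) :=
    (χ.contDiff).comp (contDiff_const_smul c)
  refine ⟨fun x => (1 - b x) * χ (c • x), (contDiff_const.sub b.contDiff).mul hsm, ?_, ?_, ?_, ?_, ?_, ?_⟩
  · refine HasCompactSupport.intro (isCompact_closedBall 0 (2 * ((j : ℝ) + 1))) ?_
    intro x hx
    have hx' : 2 * ((j : ℝ) + 1) < ‖x‖ := by simpa using hx
    have : χ (c • x) = 0 := by
      apply χ.zero_of_le_dist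
      rw [dist_zero_right, norm_smul, Real.norm_of_nonneg hc0.le, hc, inv_mul_eq_div,
        le_div_iff₀ (by positivity)]
      exact hx'.le
    simp [this]
  · intro x
    exact mul_nonneg (sub_nonneg.mpr b.le_one) χ.nonneg
  · intro x
    have h1 := b.nonneg (x := x)
    have h2 := b.le_one (x := x)
    have h3 := χ.nonneg (x := c • x)
    have h4 := χ.le_one (x := c • x)
    nlinarith
  · intro x hx
    by_contra hn
    push Not at hn
    refine notMem_tsupport_iff_eventuallyEq.mpr ?_ hx
    have : Metric.ball (0 : EuclideanSpace ℝ (Fin (k+3))) (3 / 2 * R₀) ∈ 𝓝 x :=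
      Metric.isOpen_ball.mem_nhds (by simp; linarith)
    filter_upwards [this] with y hy
    have : b y = 1 := b.one_of_mem_closedBall (Metric.ball_subset_closedBall hy)
    simp [this]
  · intro x hx hx2
    have h1 : b x = 0 := by
      apply b.zero_of_le_dist
      rw [dist_zero_right]
      exact hx.le
    have h2 : χ (c • x) = 1 := by
      apply χ.one_of_mem_closedBall
      rw [mem_closedBall_zero_iff, norm_smul, Real.norm_of_nonneg hc0.le, hc, inv_mul_eq_div]
      exact (div_le_one (by positivity)).mpr hx2.le
    simp [h1, h2]
  · have hi2 : Integrable (fun x : EuclideanSpace ℝ (Fin (k+3)) =>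
        ‖fderiv ℝ χ (c • x)‖ ^ (k + 3)) volume := (hint χ).comp_smul hc0.ne'
    refine ⟨fun x => 2 ^ (k + 2) * (‖fderiv ℝ b x‖ ^ (k + 3) +
      c ^ (k + 3) * ‖fderiv ℝ χ (c • x)‖ ^ (k + 3)), ?_, ?_, ?_⟩
    · exact ((hint b).add (hi2.const_mul _)).const_mul _
    · intro x
      have hb : HasFDerivAt b (fderiv ℝ b x) x :=
        ((b.contDiff (n := 1)).differentiable (by simp) x).hasFDerivAt
      have hχ : HasFDerivAt χ (fderiv ℝ χ (c • x)) (c • x) :=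
        ((χ.contDiff (n := 1)).differentiable (by simp) (c • x)).hasFDerivAt
      have hχc : HasFDerivAt (fun y => χ (c • y)) (c • fderiv ℝ χ (c • x)) x := by
        have := hχ.comp x ((hasFDerivAt_id x).const_smul c)
        refine this.congr_fderiv ?_
        ext v
        simp
      have hd := ((hb.const_sub 1).mul hχc).fderiv
      have hle : ‖fderiv ℝ (fun y => (1 - b y) * χ (c • y)) x‖ ≤
          ‖fderiv ℝ b x‖ + c * ‖fderiv ℝ χ (c • x)‖ := by
        have hd' : fderiv ℝ (fun y => (1 - b y) * χ (c • y)) x =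
          (1 - b x) • (c • fderiv ℝ χ (c • x)) + χ (c • x) • (-fderiv ℝ b x) := hd
        rw [hd']
        refine (norm_add_le _ _).trans ?_
        rw [norm_smul, norm_smul, norm_smul, norm_neg, Real.norm_of_nonneg hc0.le,
          Real.norm_of_nonneg χ.nonneg, Real.norm_of_nonneg (sub_nonneg.mpr b.le_one)]
        have h1 := b.nonneg (x := x)
        have h4 := χ.le_one (x := c • x)
        have a1 : (1 - b x) * (c * ‖fderiv ℝ χ (c • x)‖) ≤ 1 * (c * ‖fderiv ℝ χ (c • x)‖) := by
          gcongr; linarith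
        have a2 : χ (c • x) * ‖fderiv ℝ b x‖ ≤ 1 * ‖fderiv ℝ b x‖ := by gcongr
        linarith
      calc _ ≤ (‖fderiv ℝ b x‖ + c * ‖fderiv ℝ χ (c • x)‖) ^ (k + 3) := by gcongr
        _ ≤ 2 ^ (k + 3 - 1) * (‖fderiv ℝ b x‖ ^ (k + 3) + (c * ‖fderiv ℝ χ (c • x)‖) ^ (k + 3)) :=
          add_pow_le (by positivity) (by positivity) _
        _ = _ := by rw [mul_pow]; rfl
    · rw [integral_const_mul, integral_add (hint b) (hi2.const_mul _), integral_const_mul]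
      rw [Measure.integral_comp_smul volume (fun x => ‖fderiv ℝ χ x‖ ^ (k + 3)) c]
      rw [finrank_euclideanSpace_fin, abs_of_pos (by positivity), smul_eq_mul, ← mul_assoc,
        mul_inv_cancel₀ (by positivity), one_mul]

theorem stmt_7 (n : ℕ) (hn : 3 ≤ n) (R₀ C_S : ℝ) (hR₀ : 0 < R₀) (hC_S : 0 ≤ C_S)
    (u : EuclideanSpace ℝ (Fin n) → ℝ)
    (G : EuclideanSpace ℝ (Fin n) → EuclideanSpace ℝ (Fin n))
    (M : ℝ) (hubd : ∀ x : EuclideanSpace ℝ (Fin n), R₀ < ‖x‖ → |u x| ≤ M)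
    (hgrad : ∀ x : EuclideanSpace ℝ (Fin n), R₀ < ‖x‖ → HasGradientAt u (G x) x)
    (hlip : ∀ x : EuclideanSpace ℝ (Fin n), R₀ < ‖x‖ → ∃ s ∈ nhds x, ∃ K, LipschitzOnWith K G s)
    (S : EuclideanSpace ℝ (Fin n) → EuclideanSpace ℝ (Fin n) →L[ℝ] EuclideanSpace ℝ (Fin n))
    (hScont : ContinuousOn S {x : EuclideanSpace ℝ (Fin n) | R₀ < ‖x‖})
    (hSsymm : ∀ x : EuclideanSpace ℝ (Fin n), R₀ < ‖x‖ → ∀ v w, ⟪S x v, w⟫ = ⟪v, S x w⟫)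
    (hSbd : ∀ x : EuclideanSpace ℝ (Fin n), R₀ < ‖x‖ → ‖S x‖ ≤ C_S / ‖x‖^4)
    (hae : ∀ᵐ x ∂volume, R₀ < ‖x‖ →
      ∃ H : EuclideanSpace ℝ (Fin n) →L[ℝ] EuclideanSpace ℝ (Fin n),
        HasFDerivAt G H x ∧
        ∀ v, 0 ≤ ((n : ℝ) - 2) * ⟪H v, v⟫
          + (LinearMap.trace ℝ _ H.toLinearMap) * ‖v‖^2
          + ((n : ℝ) - 2) * ⟪G x, v⟫^2
          - ((n : ℝ) - 2) * ‖G x‖^2 * ‖v‖^2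
          + ⟪S x v, v⟫) :
    ∫⁻ x in {x : EuclideanSpace ℝ (Fin n) | 2*R₀ < ‖x‖},
        ENNReal.ofReal (‖G x‖ ^ n) < ⊤ := by
  obtain ⟨k, rfl⟩ : ∃ k, n = k + 3 := ⟨n - 3, by omega⟩
  have hae' : ∀ᵐ x : EuclideanSpace ℝ (Fin (k+3)) ∂volume, R₀ < ‖x‖ →
      ∃ H : EuclideanSpace ℝ (Fin (k+3)) →L[ℝ] EuclideanSpace ℝ (Fin (k+3)),
        HasFDerivAt G H x ∧ 0 ≤ ((k : ℝ) + 1) * ⟪H (G x), G x⟫ +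
        LinearMap.trace ℝ _ H.toLinearMap * ‖G x‖ ^ 2 + (C_S / ‖x‖ ^ 4) * ‖G x‖ ^ 2 := by
    filter_upwards [hae] with x hx hxR
    obtain ⟨H, hH, hv⟩ := hx hxR
    refine ⟨H, hH, ?_⟩
    have h1 := hv (G x)
    have h2 : ⟪S x (G x), G x⟫ ≤ C_S / ‖x‖ ^ 4 * ‖G x‖ ^ 2 := by
      calc ⟪S x (G x), G x⟫ ≤ ‖S x (G x)‖ * ‖G x‖ := real_inner_le_norm _ _
        _ ≤ (C_S / ‖x‖ ^ 4 * ‖G x‖) * ‖G x‖ := by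
          gcongr
          exact (S x).le_of_opNorm_le (hSbd x hxR) _
        _ = _ := by ring
    rw [real_inner_self_eq_norm_sq] at h1
    push_cast at h1
    have e : ((k : ℝ) + 3 - 2) = k + 1 := by ring
    rw [e] at h1
    nlinarith
  obtain ⟨C₁, C₂, -, -, hkey⟩ := key_est k R₀ C_S hR₀ hC_S u G |M| (abs_nonneg M)
    (fun x hx => (hubd x hx).trans (le_abs_self M)) hgrad
    (fun x hx => by
      obtain ⟨s, hs, K, h⟩ := hlip x hx
      exact ⟨K, s, hs, h⟩) hae'
  obtain ⟨I, hcut⟩ := cutoff k R₀ hR₀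
  let T : ℕ → Set (EuclideanSpace ℝ (Fin (k+3))) :=
    fun j => {x | 2 * R₀ < ‖x‖ ∧ ‖x‖ < (j : ℝ) + 1}
  have hTm : ∀ j, MeasurableSet (T j) := fun j =>
    ((isOpen_lt continuous_const continuous_norm).inter
      (isOpen_lt continuous_norm continuous_const)).measurableSet
  have hTmono : Monotone T := by
    intro i j hij x hx
    refine ⟨hx.1, hx.2.trans_le ?_⟩
    have : (i : ℝ) ≤ j := by exact_mod_cast hij
    linarith
  have hU : {x : EuclideanSpace ℝ (Fin (k+3)) | 2*R₀ < ‖x‖} = ⋃ j, T j := by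
    ext x
    simp only [Set.mem_ofPred_eq, Set.mem_iUnion, T]
    refine ⟨fun h => ?_, fun ⟨j, h⟩ => h.1⟩
    obtain ⟨j, hj⟩ := exists_nat_gt ‖x‖
    exact ⟨j, h, by linarith⟩
  have hbound : ∀ j, ∫⁻ x in T j, ENNReal.ofReal (‖G x‖ ^ (k + 3)) ≤
      2 * ENNReal.ofReal (C₁ * I + C₂) := by
    intro j
    obtain ⟨φ, h1, h2, h3, h4, h5, h6, N, h7, h8, h9⟩ := hcut j
    have hk := hkey φ h1 h2 h3 h4 h5 N h7 h8
    rw [h9] at hk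
    refine le_trans ?_ (mul_le_mul_right hk 2)
    rw [← lintegral_const_mul' _ _ (by simp)]
    refine le_trans ?_ (setLIntegral_le_lintegral (T j) _)
    refine setLIntegral_mono' (hTm j) (fun x hx => ?_)
    rw [h6 x hx.1 hx.2, one_pow, one_mul]
    generalize ‖G x‖ ^ (k + 3) = r
    rw [← ENNReal.ofReal_ofNat 2, ← ENNReal.ofReal_mul (by norm_num)]
    apply ENNReal.ofReal_le_ofReal
    linarith
  have hUm : MeasurableSet (⋃ j, T j) := MeasurableSet.iUnion hTm
  refine lt_of_le_of_lt (b := 2 * ENNReal.ofReal (C₁ * I + C₂)) ?_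
    (ENNReal.mul_lt_top (by simp) ENNReal.ofReal_lt_top)
  rw [hU, ← withDensity_apply _ hUm, hTmono.measure_iUnion]
  refine iSup_le fun j => ?_
  rw [withDensity_apply _ (hTm j)]
  exact hbound j
end

section
/- Let a ∈ (0,1) and K ≥ 0, and let h : ℕ → ℝ satisfy, for every N ≥ 0, h(N+1) ≤ h(N) − 2·log(a/2^N) + (2 − K·(a/2^{N+1})²)·log(a/2^{N+1}). Then there exists a constant C₄ ≥ 0, depending only on a and K, such that for every N ≥ 0: h(N) ≤ h(0) − 2·log a + 2·log(a/2^N) + C₄. -/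
theorem stmt_10 (a K : ℝ) (ha0 : 0 < a) (ha1 : a < 1) (hK : 0 ≤ K) :
    ∃ C₄ : ℝ, 0 ≤ C₄ ∧ ∀ h : ℕ → ℝ,
      (∀ N : ℕ, h (N+1) ≤ h N - 2 * Real.log (a / 2^N)
        + (2 - K * (a / 2^(N+1))^2) * Real.log (a / 2^(N+1))) →
      ∀ N : ℕ, h N ≤ h 0 - 2 * Real.log a + 2 * Real.log (a / 2^N) + C₄ := by
  have key : ∀ x : ℝ, 0 < x → -(x ^ 2 * Real.log x) ≤ x := by
    intro x hx
    have h1 := Real.log_le_sub_one_of_pos (inv_pos.mpr hx)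
    rw [Real.log_inv] at h1
    have h2 := mul_le_mul_of_nonneg_left h1 (sq_nonneg x)
    have h3 : x ^ 2 * (x⁻¹ - 1) = x - x ^ 2 := by field_simp
    nlinarith [sq_nonneg x]
  refine ⟨K * a, by positivity, fun h hh N => ?_⟩
  have main : ∀ N : ℕ, h N ≤ h 0 - 2 * Real.log a + 2 * Real.log (a / 2^N)
      + K * (a - a / 2^N) := by
    intro N
    induction N with
    | zero => simp
    | succ n ih =>
      have h1 := hh n
      have h2 := mul_le_mul_of_nonneg_left (key (a / 2^(n+1)) (by positivity)) hK
      have h3 : a / 2^n = 2 * (a / 2^(n+1)) := by field_simp; ring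
      have h4 : K * (a - a / 2^n) = K * a - 2 * (K * (a / 2^(n+1))) := by rw [h3]; ring
      rw [h4] at ih
      nlinarith
  have h5 : 0 ≤ K * (a / 2^N) := by positivity
  nlinarith [main N]
end

section
/- Let X be a compact metric space, v₀ > 0, ε₀ > 0, and let (μ_i)_{i ∈ ℕ} be a sequence of finite Borel measures on X with μ_i(X) ≤ v₀ for every i. Then there exists a strictly increasing function φ : ℕ → ℕ such that the set S = { x ∈ X : inf_{r > 0} ( limsup_{i → ∞} μ_{φ(i)}(B(x,r)) ) ≥ ε₀ } is finite and has at most v₀/ε₀ elements, where B(x,r) denotes the open ball of radius r about x. -/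
open MeasureTheory Filter

theorem stmt_11 {X : Type*} [MetricSpace X] [CompactSpace X]
    [MeasurableSpace X] [BorelSpace X]
    (v₀ ε₀ : ℝ) (hv₀ : 0 < v₀) (hε₀ : 0 < ε₀)
    (μ : ℕ → Measure X) (hfin : ∀ i, IsFiniteMeasure (μ i))
    (hμ : ∀ i, μ i Set.univ ≤ ENNReal.ofReal v₀) :
    ∃ φ : ℕ → ℕ, StrictMono φ ∧
      {x : X | ENNReal.ofReal ε₀ ≤
        ⨅ (r : ℝ) (_ : 0 < r), limsup (fun i => μ (φ i) (Metric.ball x r)) atTop}.Finite ∧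
      (({x : X | ENNReal.ofReal ε₀ ≤
        ⨅ (r : ℝ) (_ : 0 < r), limsup (fun i => μ (φ i) (Metric.ball x r)) atTop}.ncard : ℝ)
        ≤ v₀ / ε₀) := by
  classical
  haveI : SecondCountableTopology X := inferInstance
  obtain ⟨L, φ, hφ, hL⟩ := SeqCompactSpace.tendsto_subseq
    (fun i => (fun U : TopologicalSpace.countableBasis X => μ i (U : Set X)))
  rw [tendsto_pi_nhds] at hL
  refine ⟨φ, hφ, ?_⟩
  set S := {x : X | ENNReal.ofReal ε₀ ≤
        ⨅ (r : ℝ) (_ : 0 < r), limsup (fun i => μ (φ i) (Metric.ball x r)) atTop} with hS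
  have key : ∀ F : Finset X, (F : Set X) ⊆ S → (F.card : ℝ) ≤ v₀ / ε₀ := by
    intro F hF
    obtain ⟨V, hV, hd⟩ := F.finite_toSet.t2_separation
    have hb : ∀ x, ∃ U : TopologicalSpace.countableBasis X, x ∈ (U : Set X) ∧ (U : Set X) ⊆ V x := by
      intro x
      obtain ⟨U, hU, h1, h2⟩ := (TopologicalSpace.isBasis_countableBasis X).exists_subset_of_mem_open
        (hV x).1 (hV x).2
      exact ⟨⟨U, hU⟩, h1, h2⟩
    choose U hxU hUV using hb
    have hop : ∀ x, IsOpen (U x : Set X) := fun x =>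
      TopologicalSpace.isOpen_of_mem_countableBasis (U x).2
    have hLx : ∀ x ∈ F, ENNReal.ofReal ε₀ ≤ L (U x) := by
      intro x hx
      obtain ⟨r, hr, hball⟩ := Metric.isOpen_iff.1 (hop x) x (hxU x)
      have h1 : ENNReal.ofReal ε₀ ≤ _ := hF hx
      refine h1.trans ((iInf₂_le r hr).trans ?_)
      rw [← (hL (U x)).limsup_eq]
      exact limsup_le_limsup (Eventually.of_forall fun i => measure_mono hball)
    have hsum : ∑ x ∈ F, L (U x) ≤ ENNReal.ofReal v₀ := by
      refine le_of_tendsto (tendsto_finsetSum F fun x _ => hL (U x)) (Eventually.of_forall fun i => ?_)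
      have hd' : (F : Set X).PairwiseDisjoint (fun x => (U x : Set X)) :=
        fun x hx y hy hxy => (hd hx hy hxy).mono (hUV x) (hUV y)
      have := measure_biUnion_finset (μ := μ (φ i)) hd' (fun x _ => (hop x).measurableSet)
      exact this.symm.le.trans ((measure_mono (Set.subset_univ _)).trans (hμ _))
    have h2 : (F.card : ENNReal) * ENNReal.ofReal ε₀ ≤ ENNReal.ofReal v₀ := by
      rw [← nsmul_eq_mul]
      exact (Finset.card_nsmul_le_sum F _ _ hLx).trans hsum
    rw [le_div_iff₀ hε₀, ← ENNReal.ofReal_le_ofReal_iff hv₀.le,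
      ENNReal.ofReal_mul (Nat.cast_nonneg _), ENNReal.ofReal_natCast]
    exact h2
  have hfinS : S.Finite := by
    by_contra hinf
    obtain ⟨n, hn⟩ := exists_nat_gt (v₀ / ε₀)
    obtain ⟨F, hF, hc⟩ := Set.Infinite.exists_subset_card_eq hinf n
    have := key F hF
    rw [hc] at this
    linarith
  refine ⟨hfinS, ?_⟩
  rw [Set.ncard_eq_toFinset_card S hfinS]
  exact key _ (by simp)
end

section
/- Let n ≥ 1, let U ⊆ ℝⁿ be open, and let F : U → ℝ be differentiable with locally Lipschitz derivative (i.e., F is of class C^{1,1}_loc). Suppose F attains a local minimum at z₀ ∈ U. Let a : U → (symmetric n×n real matrices) be continuously differentiable with a(z₀) positive definite. Then there exists a sequence of points z_j ∈ U with: (i) z_j → z₀ as j → ∞; (ii) the gradient ∇F is differentiable at each z_j, with derivative matrix D²F(z_j); (iii) liminf_{j → ∞} Σ_{i,l} a_{il}(z_j)·(D²F(z_j))_{il} ≥ 0; and (iv) ∇F(z_j) → 0 as j → ∞. -/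
open RealInnerProductSpace Filter

/-- Second-order necessary condition at a local minimum, for a gradient that is merely
differentiable at the point. -/
lemma hess_nonneg {E : Type*} [NormedAddCommGroup E] [InnerProductSpace ℝ E] [CompleteSpace E]
    (g : E → ℝ) (g' : E → E) (L : E →L[ℝ] E) (x : E)
    (hg : ∀ᶠ y in nhds x, HasGradientAt g (g' y) y) (hmin : IsLocalMin g x)
    (hL : HasFDerivAt g' L x) (v : E) : 0 ≤ ⟪L v, v⟫ := by
  by_contra hneg
  push Not at hneg
  have hline : ∀ t : ℝ, HasDerivAt (fun t : ℝ => x + t • v) v t := fun t => by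
    simpa using ((hasDerivAt_id t).smul_const v).const_add x
  have hcont : Tendsto (fun t : ℝ => x + t • v) (nhds 0) (nhds x) := by
    have := (hline 0).continuousAt.tendsto
    simpa using this
  set φ : ℝ → ℝ := fun t => g (x + t • v) with hφ
  have hd : ∀ᶠ t in nhds (0:ℝ), HasDerivAt φ ⟪g' (x + t • v), v⟫ t := by
    filter_upwards [hcont.eventually hg] with t ht
    have := ht.hasFDerivAt.comp_hasDerivAt t (hline t)
    exact this.congr_deriv (by simp)
  have hmin0 : IsLocalMin φ 0 := by
    filter_upwards [hcont.eventually hmin] with t ht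
    simpa [hφ] using ht
  have hderiv : deriv φ =ᶠ[nhds 0] fun t => ⟪g' (x + t • v), v⟫ := by
    filter_upwards [hd] with t ht using ht.deriv
  have h2 : HasDerivAt (fun t : ℝ => ⟪g' (x + t • v), v⟫) ⟪L v, v⟫ 0 := by
    have hL' : HasFDerivAt g' L (x + (0:ℝ) • v) := by simpa using hL
    have := (hL'.comp_hasDerivAt (0:ℝ) (hline 0)).inner ℝ (hasDerivAt_const (0:ℝ) v)
    simpa using this
  have hdd : deriv (deriv φ) 0 = ⟪L v, v⟫ := by
    rw [hderiv.deriv_eq, h2.deriv]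
  have hmax : IsLocalMax φ 0 := isLocalMax_of_deriv_deriv_neg (by rw [hdd]; exact hneg)
    hmin0.deriv_eq_zero hd.self_of_nhds.continuousAt
  have hconst : φ =ᶠ[nhds 0] fun _ => φ 0 := by
    filter_upwards [hmin0, hmax] with t h1 h2 using le_antisymm h2 h1
  have h0 : deriv φ =ᶠ[nhds 0] fun _ => 0 := by
    have := hconst.deriv
    simpa using this
  have : deriv (deriv φ) 0 = 0 := by rw [h0.deriv_eq]; simp
  rw [hdd] at this
  exact hneg.ne this

/-- Contact points: at a local minimum, there are nearby points of twice differentiability with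
almost nonnegative Hessian. -/
lemma exists_contact {E : Type*} [NormedAddCommGroup E] [InnerProductSpace ℝ E]
    [FiniteDimensional ℝ E] (F : E → ℝ) (G : E → E) (z₀ : E) (r δ : ℝ) (hr : 0 < r) (hδ : 0 < δ)
    (K : NNReal)
    (hgrad : ∀ x ∈ Metric.closedBall z₀ r, HasGradientAt F (G x) x)
    (hlip : LipschitzOnWith K G (Metric.closedBall z₀ r))
    (hmin : ∀ x ∈ Metric.closedBall z₀ r, F z₀ ≤ F x) :
    ∃ x ∈ Metric.ball z₀ r, ∃ H : E →L[ℝ] E, HasFDerivAt G H x ∧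
      ∀ v, 0 ≤ ⟪H v, v⟫ + 2 * δ * ⟪v, v⟫ := by
  letI : MeasurableSpace E := borel E
  haveI : BorelSpace E := ⟨rfl⟩
  set μ : MeasureTheory.Measure E :=
    MeasureTheory.Measure.hausdorffMeasure (Module.finrank ℝ E : ℝ) with hμ
  set G' : E → E := fun x => G x + (2 * δ) • (x - z₀) with hG'
  have hgr : ∀ p : E, ∀ x ∈ Metric.closedBall z₀ r,
      HasGradientAt (fun y => F y + δ * ‖y - z₀‖ ^ 2 - ⟪p, y⟫) (G' x - p) x := by
    intro p x hx
    rw [hasGradientAt_iff_hasFDerivAt]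
    have h1 := (hgrad x hx).hasFDerivAt
    have h2 : HasFDerivAt (fun y : E => ‖y - z₀‖ ^ 2) _ x :=
      ((hasFDerivAt_id x).sub_const z₀).norm_sq
    have h3 : HasFDerivAt (fun y : E => ⟪p, y⟫) (innerSL ℝ p) x := (innerSL ℝ p).hasFDerivAt
    refine ((h1.add (h2.const_mul δ)).sub h3).congr_fderiv ?_
    ext v
    simp [hG', inner_add_left, inner_sub_left, inner_smul_left]
    ring
  have hball : ∀ x ∈ Metric.ball z₀ r, Metric.closedBall z₀ r ∈ nhds x := fun x hx =>
    mem_of_superset (Metric.isOpen_ball.mem_nhds hx) Metric.ball_subset_closedBall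
  -- every small `p` is attained as a slope at an interior local minimum
  have hcontact : ∀ p ∈ Metric.ball (0:E) (δ * r), ∃ x ∈ Metric.ball z₀ r,
      IsLocalMin (fun y => F y + δ * ‖y - z₀‖ ^ 2 - ⟪p, y⟫) x ∧ G' x = p := by
    intro p hp
    have hcont : ContinuousOn (fun y => F y + δ * ‖y - z₀‖ ^ 2 - ⟪p, y⟫)
        (Metric.closedBall z₀ r) := fun x hx =>
      (hgr p x hx).hasFDerivAt.continuousAt.continuousWithinAt
    obtain ⟨x, hx, hxmin⟩ := (isCompact_closedBall z₀ r).exists_isMinOn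
      ⟨z₀, Metric.mem_closedBall_self hr.le⟩ hcont
    have hxb : x ∈ Metric.ball z₀ r := by
      by_contra hnot
      have hxr : ‖x - z₀‖ = r := by
        rw [← dist_eq_norm]
        exact le_antisymm hx (not_lt.mp hnot)
      have h1 := hxmin (Metric.mem_closedBall_self hr.le : z₀ ∈ _)
      have h2 := hmin x hx
      have h3 : ⟪p, x - z₀⟫ ≤ ‖p‖ * ‖x - z₀‖ := real_inner_le_norm _ _
      have h4 : ‖p‖ < δ * r := by simpa using hp
      simp only [Set.mem_ofPred_eq, sub_self, norm_zero] at h1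
      rw [inner_sub_right] at h3
      rw [hxr] at h1 h3
      nlinarith
    have hloc := hxmin.isLocalMin (hball x hxb)
    refine ⟨x, hxb, hloc, ?_⟩
    have := hloc.hasFDerivAt_eq_zero (hgr p x hx).hasFDerivAt
    have h0 : G' x - p = 0 := (InnerProductSpace.toDual ℝ E).map_eq_zero_iff.mp this
    exact sub_eq_zero.mp h0
  have hlip' : LipschitzOnWith (K + ‖2 * δ‖₊ * 1) G' (Metric.closedBall z₀ r) := by
    refine hlip.add ?_
    refine LipschitzWith.lipschitzOnWith ?_
    refine (lipschitzWith_smul (2 * δ)).comp ?_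
    exact LipschitzWith.of_dist_le_mul (fun x y => by simp)
  by_contra hcon
  push Not at hcon
  set N : Set E := {x | ¬ (x ∈ Metric.closedBall z₀ r →
    DifferentiableWithinAt ℝ G (Metric.closedBall z₀ r) x)} with hN
  have hNnull : μ N = 0 := by
    have := hlip.ae_differentiableWithinAt_of_mem (μ := μ)
    exact this
  have hNsub : N ⊆ Metric.closedBall z₀ r := fun x hx => by
    by_contra h
    exact hx (fun h' => absurd h' h)
  have himg : μ (G' '' N) = 0 := by
    have := (hlip'.mono hNsub).hausdorffMeasure_image_le (d := (Module.finrank ℝ E : ℝ))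
      (by positivity)
    rw [← hμ, hNnull, mul_zero] at this
    exact le_antisymm this bot_le
  have hsub : Metric.ball (0:E) (δ * r) ⊆ G' '' N := by
    intro p hp
    obtain ⟨x, hx, hloc, hxp⟩ := hcontact p hp
    refine ⟨x, ?_, hxp⟩
    intro hdiff
    have hd := (hdiff (Metric.ball_subset_closedBall hx)).differentiableAt (hball x hx)
    obtain ⟨v, hv⟩ := hcon x hx (fderiv ℝ G x) hd.hasFDerivAt
    refine absurd ?_ (not_le.mpr hv)
    have hL : HasFDerivAt (fun y => G' y - p)
        (fderiv ℝ G x + (2 * δ) • ContinuousLinearMap.id ℝ E) x :=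
      (hd.hasFDerivAt.add (((hasFDerivAt_id x).sub_const z₀).const_smul (2 * δ))).sub_const p
    have := hess_nonneg _ _ _ x (by filter_upwards [hball x hx] with y hy using hgr p y hy)
      hloc hL v
    simpa [inner_add_left, inner_smul_left] using this
  have hpos : 0 < μ (Metric.ball (0:E) (δ * r)) := Metric.measure_ball_pos μ _ (by positivity)
  exact (hpos.trans_le (MeasureTheory.measure_mono hsub)).ne' himg

/-- The trace pairing of two nonnegative operators is nonnegative. -/
lemma trace_nonneg {n : ℕ} (A H : EuclideanSpace ℝ (Fin n) →L[ℝ] EuclideanSpace ℝ (Fin n))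
    (hsym : ∀ v w, ⟪A v, w⟫ = ⟪v, A w⟫) (hA : ∀ v, 0 ≤ ⟪A v, v⟫) (hH : ∀ v, 0 ≤ ⟪H v, v⟫) :
    0 ≤ ∑ i, ∑ l,
        ⟪A (EuclideanSpace.single l (1:ℝ)), EuclideanSpace.single i (1:ℝ)⟫ *
        ⟪H (EuclideanSpace.single l (1:ℝ)), EuclideanSpace.single i (1:ℝ)⟫ := by
  have hT : (A : EuclideanSpace ℝ (Fin n) →ₗ[ℝ] EuclideanSpace ℝ (Fin n)).IsSymmetric := hsym
  have hf : Module.finrank ℝ (EuclideanSpace ℝ (Fin n)) = n := by simp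
  set b := hT.eigenvectorBasis hf
  set e := EuclideanSpace.basisFun (Fin n) ℝ
  have h1 : ∑ i, ∑ l,
        ⟪A (EuclideanSpace.single l (1:ℝ)), EuclideanSpace.single i (1:ℝ)⟫ *
        ⟪H (EuclideanSpace.single l (1:ℝ)), EuclideanSpace.single i (1:ℝ)⟫
      = LinearMap.trace ℝ _ ((A ∘L H : EuclideanSpace ℝ (Fin n) →L[ℝ] EuclideanSpace ℝ (Fin n)) :
        EuclideanSpace ℝ (Fin n) →ₗ[ℝ] EuclideanSpace ℝ (Fin n)) := by
    rw [LinearMap.trace_eq_sum_inner _ e, Finset.sum_comm]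
    refine Finset.sum_congr rfl fun l _ => ?_
    have : ⟪e l, A (H (e l))⟫ = ⟪A (e l), H (e l)⟫ := (hsym _ _).symm
    change _ = ⟪e l, A (H (e l))⟫
    rw [this, ← e.sum_inner_mul_inner]
    refine Finset.sum_congr rfl fun i _ => ?_
    rw [real_inner_comm (H (e l)) (e i)]
    simp [e]
  rw [h1, LinearMap.trace_eq_sum_inner _ b]
  refine Finset.sum_nonneg fun k _ => ?_
  have hk : A (b k) = hT.eigenvalues hf k • b k := hT.apply_eigenvectorBasis hf k
  have hk0 : 0 ≤ hT.eigenvalues hf k := by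
    have := hA (b k)
    rw [hk, inner_smul_left] at this
    simpa using this
  change 0 ≤ ⟪b k, A (H (b k))⟫
  rw [← hsym, hk, real_inner_smul_left, real_inner_comm]
  exact mul_nonneg hk0 (hH _)

/-- Positive definiteness is an open condition (in the weak form needed here). -/
lemma eventually_nonneg {X E : Type*} [TopologicalSpace X] [NormedAddCommGroup E]
    [InnerProductSpace ℝ E]
    [FiniteDimensional ℝ E] (a : X → E →L[ℝ] E) (z₀ : X) (hc : ContinuousAt a z₀)
    (hpos : ∀ v, v ≠ 0 → 0 < ⟪a z₀ v, v⟫) : ∀ᶠ x in nhds z₀, ∀ v, 0 ≤ ⟪a x v, v⟫ := by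
  obtain ⟨c, hc0, hcb⟩ : ∃ c > 0, ∀ v ∈ Metric.sphere (0:E) 1, c ≤ ⟪a z₀ v, v⟫ := by
    rcases (Metric.sphere (0:E) 1).eq_empty_or_nonempty with h | h
    · exact ⟨1, one_pos, by simp [h]⟩
    · obtain ⟨w, hw, hwm⟩ := (isCompact_sphere (0:E) 1).exists_isMinOn h
        (f := fun v => ⟪a z₀ v, v⟫) (by fun_prop)
      refine ⟨⟪a z₀ w, w⟫, hpos w ?_, fun v hv => hwm hv⟩
      rintro rfl
      simp at hw
  have hev : ∀ᶠ x in nhds z₀, ‖a x - a z₀‖ < c := by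
    have := hc.eventually (Metric.ball_mem_nhds (a z₀) hc0)
    filter_upwards [this] with x hx
    simpa [dist_eq_norm] using hx
  filter_upwards [hev] with x hx v
  have hq : c * ‖v‖ ^ 2 ≤ ⟪a z₀ v, v⟫ := by
    rcases eq_or_ne v 0 with rfl | hv
    · simp
    · have hn : ‖v‖ ≠ 0 := by simpa using hv
      have := hcb (‖v‖⁻¹ • v) (by simp [norm_smul, hn])
      rw [map_smul, real_inner_smul_left, real_inner_smul_right] at this
      field_simp at this
      linarith
  have h2 : |⟪(a x - a z₀) v, v⟫| ≤ c * ‖v‖ ^ 2 := by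
    calc _ ≤ ‖(a x - a z₀) v‖ * ‖v‖ := abs_real_inner_le_norm _ _
      _ ≤ (‖a x - a z₀‖ * ‖v‖) * ‖v‖ := by gcongr; exact ContinuousLinearMap.le_opNorm _ _
      _ ≤ (c * ‖v‖) * ‖v‖ := by gcongr
      _ = _ := by ring
  have h3 : ⟪(a x - a z₀) v, v⟫ = ⟪a x v, v⟫ - ⟪a z₀ v, v⟫ := by
    simp [inner_sub_left]
  rw [h3] at h2
  linarith [(abs_le.mp h2).1]

theorem stmt_12 (n : ℕ) (hn : 1 ≤ n)
    (U : Set (EuclideanSpace ℝ (Fin n))) (hU : IsOpen U)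
    (F : EuclideanSpace ℝ (Fin n) → ℝ)
    (G : EuclideanSpace ℝ (Fin n) → EuclideanSpace ℝ (Fin n))
    (hgrad : ∀ x ∈ U, HasGradientAt F (G x) x)
    (hlip : ∀ x ∈ U, ∃ s ∈ nhds x, ∃ K, LipschitzOnWith K G s)
    (z₀ : EuclideanSpace ℝ (Fin n)) (hz₀ : z₀ ∈ U) (hmin : IsLocalMin F z₀)
    (a : EuclideanSpace ℝ (Fin n) → EuclideanSpace ℝ (Fin n) →L[ℝ] EuclideanSpace ℝ (Fin n))
    (ha : ContDiffOn ℝ 1 a U)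
    (hasymm : ∀ x ∈ U, ∀ v w, ⟪a x v, w⟫ = ⟪v, a x w⟫)
    (hapos : ∀ v : EuclideanSpace ℝ (Fin n), v ≠ 0 → 0 < ⟪a z₀ v, v⟫) :
    ∃ (z : ℕ → EuclideanSpace ℝ (Fin n))
      (H : ℕ → EuclideanSpace ℝ (Fin n) →L[ℝ] EuclideanSpace ℝ (Fin n)),
      (∀ j, z j ∈ U) ∧
      Tendsto z atTop (nhds z₀) ∧
      (∀ j, HasFDerivAt G (H j) (z j)) ∧
      0 ≤ liminf (fun j => ∑ i, ∑ l,
        ⟪a (z j) (EuclideanSpace.single l (1:ℝ)), EuclideanSpace.single i (1:ℝ)⟫ *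
        ⟪H j (EuclideanSpace.single l (1:ℝ)), EuclideanSpace.single i (1:ℝ)⟫) atTop ∧
      Tendsto (fun j => G (z j)) atTop (nhds 0) := by
  have hac : ContinuousAt a z₀ := (ha.continuousOn).continuousAt (hU.mem_nhds hz₀)
  obtain ⟨s, hs, K, hK⟩ := hlip z₀ hz₀
  have hG0 : G z₀ = 0 := by
    have := hmin.hasFDerivAt_eq_zero (hgrad z₀ hz₀).hasFDerivAt
    simpa using this
  have hGc : ContinuousAt G z₀ := hK.continuousOn.continuousAt hs
  have hgood : ∀ᶠ x in nhds z₀, x ∈ U ∧ x ∈ s ∧ F z₀ ≤ F x ∧ ∀ v, 0 ≤ ⟪a x v, v⟫ := by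
    filter_upwards [hU.mem_nhds hz₀, hs, hmin, eventually_nonneg a z₀ hac hapos]
      with x h1 h2 h3 h4 using ⟨h1, h2, h3, h4⟩
  obtain ⟨ρ, hρ, hball⟩ := Metric.eventually_nhds_iff.mp hgood
  have key : ∀ j : ℕ, ∃ x, ∃ H : EuclideanSpace ℝ (Fin n) →L[ℝ] EuclideanSpace ℝ (Fin n),
      x ∈ U ∧ dist x z₀ < 1 / ((j:ℝ) + 1) ∧ HasFDerivAt G H x ∧ (∀ v, 0 ≤ ⟪a x v, v⟫) ∧
      ∀ v, 0 ≤ ⟪H v, v⟫ + 2 * (1 / ((j:ℝ) + 1)) * ⟪v, v⟫ := by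
    intro j
    have hj : (0:ℝ) < 1 / ((j:ℝ) + 1) := by positivity
    have hr : 0 < min (ρ / 2) (1 / ((j:ℝ) + 1)) := by positivity
    have hin : ∀ x ∈ Metric.closedBall z₀ (min (ρ / 2) (1 / ((j:ℝ) + 1))), dist x z₀ < ρ := by
      intro x hx
      have h1 : dist x z₀ ≤ _ := hx
      have h2 := min_le_left (ρ / 2) (1 / ((j:ℝ) + 1))
      linarith
    obtain ⟨x, hx, H, hH, hHv⟩ := exists_contact F G z₀ _ _ hr hj K
      (fun x hx => hgrad x (hball (hin x hx)).1)
      (hK.mono fun x hx => (hball (hin x hx)).2.1)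
      (fun x hx => (hball (hin x hx)).2.2.1)
    have hb := hball (hin x (Metric.ball_subset_closedBall hx))
    exact ⟨x, H, hb.1, lt_of_lt_of_le hx (min_le_right _ _), hH, hb.2.2.2, hHv⟩
  choose z H hzU hzd hzH hza hzHv using key
  have hz : Tendsto z atTop (nhds z₀) := by
    rw [tendsto_iff_dist_tendsto_zero]
    exact squeeze_zero (fun _ => dist_nonneg) (fun j => (hzd j).le)
      tendsto_one_div_add_atTop_nhds_zero_nat
  refine ⟨z, H, hzU, hz, hzH, ?_, by simpa [hG0, Function.comp_def] using hGc.tendsto.comp hz⟩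
  set u : ℕ → ℝ := fun j => ∑ i, ∑ l,
        ⟪a (z j) (EuclideanSpace.single l (1:ℝ)), EuclideanSpace.single i (1:ℝ)⟫ *
        ⟪H j (EuclideanSpace.single l (1:ℝ)), EuclideanSpace.single i (1:ℝ)⟫ with hu
  set w : ℕ → ℝ := fun j => ∑ i, ∑ l,
        ⟪a (z j) (EuclideanSpace.single l (1:ℝ)), EuclideanSpace.single i (1:ℝ)⟫ *
        ⟪(EuclideanSpace.single l (1:ℝ) : EuclideanSpace ℝ (Fin n)),
          EuclideanSpace.single i (1:ℝ)⟫ with hw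
  have hle : ∀ j : ℕ, -(2 * (1 / ((j:ℝ) + 1)) * w j) ≤ u j := by
    intro j
    have := trace_nonneg (a (z j)) (H j + (2 * (1 / ((j:ℝ) + 1))) • ContinuousLinearMap.id ℝ _)
      (hasymm _ (hzU j)) (hza j) (fun v => by
        have := hzHv j v
        simpa only [add_apply, smul_apply,
          ContinuousLinearMap.id_apply, inner_add_left, real_inner_smul_left] using this)
    have heq : 0 ≤ u j + 2 * (1 / ((j:ℝ) + 1)) * w j := by
      refine this.trans_eq ?_
      simp only [hu, hw, Finset.mul_sum, ← Finset.sum_add_distrib]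
      refine Finset.sum_congr rfl fun i _ => Finset.sum_congr rfl fun l _ => ?_
      rw [add_apply, smul_apply,
          ContinuousLinearMap.id_apply, inner_add_left, real_inner_smul_left]
      ring
    linarith
  have haz : Tendsto (fun j => a (z j)) atTop (nhds (a z₀)) := hac.tendsto.comp hz
  have hwt : Tendsto w atTop (nhds (∑ i, ∑ l,
        ⟪a z₀ (EuclideanSpace.single l (1:ℝ)), EuclideanSpace.single i (1:ℝ)⟫ *
        ⟪(EuclideanSpace.single l (1:ℝ) : EuclideanSpace ℝ (Fin n)),
          EuclideanSpace.single i (1:ℝ)⟫)) := by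
    refine tendsto_finsetSum _ fun i _ => tendsto_finsetSum _ fun l _ => ?_
    refine Tendsto.mul_const _ (Tendsto.inner ?_ tendsto_const_nhds)
    exact ((ContinuousLinearMap.apply ℝ (EuclideanSpace ℝ (Fin n))
      (EuclideanSpace.single l (1:ℝ) : EuclideanSpace ℝ (Fin n))).continuous.tendsto _).comp haz
  have hlow : Tendsto (fun j : ℕ => -(2 * (1 / ((j:ℝ) + 1)) * w j)) atTop (nhds 0) := by
    have := ((tendsto_one_div_add_atTop_nhds_zero_nat (𝕜 := ℝ)).const_mul 2).mul hwt
    simpa using this.neg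
  rw [liminf_eq]
  by_cases hbdd : BddAbove {c | ∀ᶠ j in atTop, c ≤ u j}
  · refine le_of_forall_lt fun c hc => ?_
    obtain ⟨d, hcd, hd⟩ := exists_between hc
    refine lt_of_lt_of_le hcd (le_csSup hbdd ?_)
    filter_upwards [hlow.eventually (lt_mem_nhds hd)] with j hj using hj.le.trans (hle j)
  · rw [Real.sSup_of_not_bddAbove hbdd]
end
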